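/- Let ω_{ij} : ℝ⁸ → ℝ (1 ≤ i,j ≤ 4) be smooth functions of (x¹,...,x⁴, y¹,...,y⁴) with ω_{ij} = −ω_{ji}, and suppose that for all indices i,j,k ∈ {1,2,3,4} the cyclic closedness conditions ∂_{y^k}ω_{ij} + ∂_{y^i}ω_{jk} + ∂_{y^j}ω_{ki} = 0 and ∂_{x^k}ω_{ij} + ∂_{x^i}ω_{jk} + ∂_{x^j}ω_{ki} = 0 hold identically. Then there exists a smooth potential Θ : ℝ⁸ → ℝ such that ω_{ij} = Θ_{x^i y^j} − Θ_{x^j y^i} for all i, j. -/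

import Mathlib

noncomputable section

/-- `ℝ⁸` with coordinates `(x¹,…,x⁴, y¹,…,y⁴)`. -/
abbrev E8 : Type := (Fin 4 → ℝ) × (Fin 4 → ℝ)

/-- Directional (partial) derivative of `f` in the direction `v`. -/
def pdv {E : Type*} [NormedAddCommGroup E] [NormedSpace ℝ E]
    (v : E) (f : E → ℝ) (z : E) : ℝ := fderiv ℝ f z v

/-- Direction of the coordinate `x^i`. -/
def dx (i : Fin 4) : E8 := (Pi.single i 1, 0)
/-- Direction of the coordinate `y^i`. -/
def dy (i : Fin 4) : E8 := (0, Pi.single i 1)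

/-!
The index set is enlarged one index at a time. If a potential is known on the indices in `S`,
subtracting its skew Hessian leaves, for a new index `k`, the problem of finding `Θ` with
`Θ_{x^k y^j} - Θ_{x^j y^k} = u_j` for `j ∈ S` and vanishing skew Hessian on `S × S`, where
`∑ u_j dx^j` and `∑ u_j dy^j` are closed in the variables indexed by `S`.

Regard `(x^k, y^k)` as a point of a plane and the other coordinates as parameters. Rotating all
pairs `(x^i, y^i)` by a common angle preserves both the skew Hessian and the closedness. Suppose
`u` is the dual Radon transform (the average over the lines through a point of the plane) of
`∂_s Q`, where `Q` is a smooth family on the space of lines `(θ, s)` that is again closed in the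
parameters. For each `θ` the Poincaré lemma integrates the rotated `Q` to a potential, and
averaging the potentials rotated back over `θ` gives `Θ`.

It remains to see that the dual Radon transform is onto smooth families solving a first order
constant coefficient system in the parameters, with preimages solving the same system. For families
compactly supported in the plane an explicit inversion formula with a logarithmic kernel does this.
In general one decomposes `u` into pieces supported in annuli and corrects their preimages so that
the sum converges: where the transform of `q` vanishes on a disc, each Fourier mode of `q` in `θ`
is polynomial in `s` for small `s`, so `q` is approximated there by elements of the kernel.
-/

section Backprojection

open MeasureTheory Set Filter Topology Metric
open scoped ContDiff Real

section ParametricDerivatives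

variable {T E F : Type*} [NormedAddCommGroup T] [NormedSpace ℝ T] [NormedAddCommGroup E]
  [NormedSpace ℝ E] [NormedAddCommGroup F] [NormedSpace ℝ F]

theorem contDiff_fderiv_param {f : T → E → F} (hf : ContDiff ℝ ∞ (Function.uncurry f)) :
    ContDiff ℝ ∞ (Function.uncurry fun t x => fderiv ℝ (f t) x) :=
  ContDiff.fderiv (f := fun p : T × E => f p.1) (g := Prod.snd) (n := ∞)
    (hf.comp (by fun_prop : ContDiff ℝ ∞ fun q : (T × E) × E => (q.1.1, q.2))) contDiff_snd
    (by simp)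

theorem contDiff_iteratedFDeriv_param {f : T → E → F} (hf : ContDiff ℝ ∞ (Function.uncurry f))
    (n : ℕ) : ContDiff ℝ ∞ (Function.uncurry fun t x => iteratedFDeriv ℝ n (f t) x) := by
  induction n with
  | zero =>
    simp only [Function.uncurry_def, iteratedFDeriv_zero_eq_comp]
    exact (LinearIsometryEquiv.contDiff _).comp hf
  | succ n ih =>
    simp only [Function.uncurry_def, iteratedFDeriv_succ_eq_comp_left]
    exact (LinearIsometryEquiv.contDiff _).comp (contDiff_fderiv_param ih)

theorem contDiff_iteratedDeriv_param {f : T → ℝ → F} (hf : ContDiff ℝ ∞ (Function.uncurry f))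
    (n : ℕ) : ContDiff ℝ ∞ (Function.uncurry fun t s => iteratedDeriv n (f t) s) := by
  simp only [Function.uncurry_def, iteratedDeriv_eq_iteratedFDeriv]
  exact (ContinuousMultilinearMap.apply ℝ (fun _ : Fin n => ℝ) F fun _ => 1).contDiff.comp
    (contDiff_iteratedFDeriv_param hf n)

end ParametricDerivatives

theorem integral_linearIsometryEquiv {T E F : Type*} [MeasurableSpace T] [NormedAddCommGroup E]
    [NormedSpace ℝ E] [NormedAddCommGroup F] [NormedSpace ℝ F] {μ : Measure T} (L : E ≃ₗᵢ[ℝ] F)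
    (f : T → E) : ∫ t, L (f t) ∂μ = L (∫ t, f t ∂μ) :=
  L.toContinuousLinearEquiv.integral_comp_comm f

/-- Families of smooth functions `f t` whose derivatives of every order are dominated by
`μ`-integrable functions of `t`, locally uniformly in the variable: those which may be integrated
over `t` and differentiated under the integral sign to any order. -/
structure Dominated {T E F : Type*} [MeasurableSpace T] [NormedAddCommGroup E] [NormedSpace ℝ E]
    [NormedAddCommGroup F] [NormedSpace ℝ F] (μ : Measure T) (f : T → E → F) :
    Prop where
  smooth : ∀ t, ContDiff ℝ ∞ (f t)
  meas : ∀ n x, AEStronglyMeasurable (fun t => iteratedFDeriv ℝ n (f t) x) μ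
  bound : ∀ (n : ℕ) (R : ℝ), ∃ B : T → ℝ, Integrable B μ ∧
    ∀ᵐ t ∂μ, ∀ x : E, ‖x‖ < R → ‖iteratedFDeriv ℝ n (f t) x‖ ≤ B t

namespace Dominated

section Integral

variable {T E F : Type*} [MeasurableSpace T] [NormedAddCommGroup E]
  [NormedSpace ℝ E] [NormedAddCommGroup F] [NormedSpace ℝ F] {μ : Measure T} {f : T → E → F}

theorem fderiv (h : Dominated μ f) : Dominated μ (fun t x => fderiv ℝ (f t) x) where
  smooth t := (h.smooth t).fderiv_right (by simp)
  meas n x := by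
    have h1 := h.meas (n + 1) x
    simp only [iteratedFDeriv_succ_eq_comp_right, Function.comp] at h1
    simpa using (LinearIsometryEquiv.continuous
      (continuousMultilinearCurryRightEquiv' ℝ n E F)).comp_aestronglyMeasurable h1
  bound n R := by
    obtain ⟨B, hB, hle⟩ := h.bound (n + 1) R
    refine ⟨B, hB, hle.mono fun t ht x hx => ?_⟩
    rw [norm_iteratedFDeriv_fderiv]
    exact ht x hx

theorem aestronglyMeasurable (h : Dominated μ f) (x : E) :
    AEStronglyMeasurable (fun t => f t x) μ := by
  have h0 := h.meas 0 x
  simp only [iteratedFDeriv_zero_eq_comp, Function.comp] at h0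
  simpa using (LinearIsometryEquiv.continuous
    (continuousMultilinearCurryFin0 ℝ E F)).comp_aestronglyMeasurable h0

theorem integrable (h : Dominated μ f) (x : E) : Integrable (fun t => f t x) μ := by
  obtain ⟨B, hB, hle⟩ := h.bound 0 (‖x‖ + 1)
  refine hB.mono' (h.aestronglyMeasurable x) ?_
  filter_upwards [hle] with t ht
  simpa using ht x (by linarith)

theorem hasFDerivAt_integral_iteratedFDeriv (h : Dominated μ f) (n : ℕ) (x : E) :
    HasFDerivAt (fun x => ∫ t, iteratedFDeriv ℝ n (f t) x ∂μ)
      (∫ t, _root_.fderiv ℝ (iteratedFDeriv ℝ n (f t)) x ∂μ) x := by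
  obtain ⟨B, hB, hle⟩ := h.bound (n + 1) (‖x‖ + 1)
  obtain ⟨B', hB', hle'⟩ := h.bound n (‖x‖ + 1)
  refine hasFDerivAt_integral_of_dominated_of_fderiv_le (bound := B)
    (F' := fun x t => _root_.fderiv ℝ (iteratedFDeriv ℝ n (f t)) x)
    (s := ball 0 (‖x‖ + 1)) (isOpen_ball.mem_nhds (by simp))
    (Eventually.of_forall fun x => h.meas n x) (hB'.mono' (h.meas n x) ?_) ?_ ?_ hB ?_
  · exact hle'.mono fun t ht => ht x (by linarith)
  · simp only [fderiv_iteratedFDeriv]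
    exact (LinearIsometryEquiv.continuous _).comp_aestronglyMeasurable (h.meas (n + 1) x)
  · filter_upwards [hle] with t ht y hy
    rw [norm_fderiv_iteratedFDeriv]
    exact ht y (by simpa using hy)
  · exact Eventually.of_forall fun t y _ =>
      ((h.smooth t).differentiable_iteratedFDeriv (mod_cast WithTop.coe_lt_top _)
        |>.differentiableAt).hasFDerivAt

theorem hasFTaylorSeriesUpTo (h : Dominated μ f) :
    HasFTaylorSeriesUpTo ∞ (fun x => ∫ t, f t x ∂μ)
      (fun x n => ∫ t, iteratedFDeriv ℝ n (f t) x ∂μ) where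
  zero_eq x := by
    simp only [iteratedFDeriv_zero_eq_comp, Function.comp_apply]
    exact congrArg ContinuousMultilinearMap.curry0
      (integral_linearIsometryEquiv (continuousMultilinearCurryFin0 ℝ E F).symm _)
  fderiv n _ x := by
    refine (h.hasFDerivAt_integral_iteratedFDeriv n x).congr_fderiv ?_
    simp only [fderiv_iteratedFDeriv, Function.comp_apply]
    exact integral_linearIsometryEquiv (E := E [×n + 1]→L[ℝ] F) (F := E →L[ℝ] E [×n]→L[ℝ] F)
      (continuousMultilinearCurryLeftEquiv ℝ (fun _ : Fin (n + 1) => E) F)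
      fun t => iteratedFDeriv ℝ (n + 1) (f t) x
  cont n _ := continuous_iff_continuousAt.2 fun x =>
    (h.hasFDerivAt_integral_iteratedFDeriv n x).continuousAt

theorem hasFDerivAt (h : Dominated μ f) (x : E) :
    HasFDerivAt (fun x => ∫ t, f t x ∂μ) (∫ t, _root_.fderiv ℝ (f t) x ∂μ) x := by
  refine (h.hasFTaylorSeriesUpTo.hasFDerivAt (by simp) x).congr_fderiv ?_
  rw [← integral_linearIsometryEquiv]
  congr! 2 with t
  ext v
  simp [iteratedFDeriv_one_apply]

theorem fderiv_integral (h : Dominated μ f) :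
    _root_.fderiv ℝ (fun x => ∫ t, f t x ∂μ) = fun x => ∫ t, _root_.fderiv ℝ (f t) x ∂μ :=
  funext fun x => (h.hasFDerivAt x).fderiv

theorem contDiff (h : Dominated μ f) : ContDiff ℝ ∞ (fun x => ∫ t, f t x ∂μ) :=
  h.hasFTaylorSeriesUpTo.contDiff

end Integral

section Compact

variable {T E F : Type*} [MeasurableSpace T] [NormedAddCommGroup T]
  [NormedSpace ℝ T] [FiniteDimensional ℝ T] [BorelSpace T] [NormedAddCommGroup E]
  [NormedSpace ℝ E] [FiniteDimensional ℝ E] [NormedAddCommGroup F] [NormedSpace ℝ F]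
  {μ : Measure T} {f : T → E → F}

theorem of_compact (hf : ContDiff ℝ ∞ (Function.uncurry f)) {κ : T → ℝ}
    (hκ : LocallyIntegrable κ μ)
    (hsupp : ∀ R : ℝ, ∃ K : Set T, IsCompact K ∧ ∀ᵐ t ∂μ, t ∉ K → ∀ x, ‖x‖ < R → f t x = 0) :
    Dominated μ (fun t x => κ t • f t x) := by
  have hs (t) : ContDiff ℝ ∞ (f t) := hf.comp (contDiff_prodMk_right t)
  have hi (n t x) : iteratedFDeriv ℝ n (fun x => κ t • f t x) x
      = κ t • iteratedFDeriv ℝ n (f t) x :=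
    iteratedFDeriv_const_smul_apply (a := κ t) (f := f t)
      ((hs t).contDiffAt.of_le (by exact_mod_cast le_top))
  have hcont (n) := (contDiff_iteratedFDeriv_param hf n).continuous
  have : ProperSpace T := FiniteDimensional.proper ℝ T
  have : ProperSpace E := FiniteDimensional.proper ℝ E
  refine ⟨fun t => contDiff_const.smul (hs t), fun n x => ?_, fun n R => ?_⟩
  · simp only [hi]
    exact hκ.aestronglyMeasurable.smul
      ((hcont n).comp (Continuous.prodMk_left x)).aestronglyMeasurable
  obtain ⟨K, hKc, hK⟩ := hsupp R
  obtain ⟨C, hC⟩ := (hKc.prod (isCompact_closedBall (0 : E) R)).exists_bound_of_continuousOn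
    (hcont n).continuousOn
  refine ⟨K.indicator fun t => ‖κ t‖ * C, (integrable_indicator_iff hKc.measurableSet).2
    ((hκ.integrableOn_isCompact hKc).norm.mul_const C), ?_⟩
  filter_upwards [hK] with t ht x hx
  by_cases htK : t ∈ K
  · rw [hi, norm_smul, indicator_of_mem htK]
    exact mul_le_mul_of_nonneg_left (hC (t, x) ⟨htK, by simpa using hx.le⟩) (norm_nonneg _)
  · have hzero : f t =ᶠ[𝓝 x] fun _ => 0 :=
      (isOpen_lt continuous_norm continuous_const).mem_nhds hx |> mem_of_superset <| ht htK
    rw [hi, (hzero.iteratedFDeriv ℝ n).eq_of_nhds, indicator_of_notMem htK]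
    simp

theorem of_Ioc {f : ℝ → E → F} (hf : ContDiff ℝ ∞ (Function.uncurry f)) (a b : ℝ) :
    Dominated (volume.restrict (Ioc a b)) f := by
  simpa using of_compact hf (locallyIntegrable_const (1 : ℝ)) fun _ =>
    ⟨Icc a b, isCompact_Icc, (ae_restrict_mem measurableSet_Ioc).mono fun t ht h =>
      absurd (Ioc_subset_Icc_self ht) h⟩

end Compact

theorem count {E F : Type*} [NormedAddCommGroup E] [NormedSpace ℝ E] [FiniteDimensional ℝ E]
    [NormedAddCommGroup F] [NormedSpace ℝ F] {f : ℕ → E → F} (hf : ∀ m, ContDiff ℝ ∞ (f m))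
    (hle : ∀ (n : ℕ) (R : ℝ), ∀ᶠ m in atTop, ∀ x, ‖x‖ < R →
      ‖iteratedFDeriv ℝ n (f m) x‖ ≤ (1 / 2) ^ m) : Dominated Measure.count f := by
  refine ⟨hf, fun n x => StronglyMeasurable.of_discrete.aestronglyMeasurable, fun n R => ?_⟩
  have : ProperSpace E := FiniteDimensional.proper ℝ E
  choose C hC using fun m => (isCompact_closedBall (0 : E) R).exists_bound_of_continuousOn
    ((hf m).continuous_iteratedFDeriv (m := n) (by exact_mod_cast le_top)).continuousOn
  obtain ⟨N, hN⟩ := eventually_atTop.1 (hle n R)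
  refine ⟨fun m => if N ≤ m then (1 / 2) ^ m else C m, ?_, .of_forall fun m x hx => ?_⟩
  · rw [integrable_count_iff]
    refine (summable_geometric_two.congr_atTop ?_).norm
    filter_upwards [eventually_ge_atTop N] with m hm
    simp [hm]
  · beta_reduce
    split_ifs with hm
    · exact hN m hm x hx
    · exact hC m x (by simpa using hx.le)

end Dominated

theorem contDiff_intervalIntegral {E F : Type*} [NormedAddCommGroup E] [NormedSpace ℝ E]
    [FiniteDimensional ℝ E] [NormedAddCommGroup F] [NormedSpace ℝ F] {f : ℝ → E → F}
    (hf : ContDiff ℝ ∞ (Function.uncurry f)) {a b : ℝ} (hab : a ≤ b) :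
    ContDiff ℝ ∞ fun x => ∫ t in a..b, f t x := by
  simpa only [intervalIntegral.integral_of_le hab] using (Dominated.of_Ioc hf a b).contDiff

section FibrewiseSystems

variable {P Q E F G : Type*} [NormedAddCommGroup E] [NormedSpace ℝ E] [NormedAddCommGroup F]
  [NormedSpace ℝ F] [NormedAddCommGroup G] [NormedSpace ℝ G] {ℓ : (E →L[ℝ] F) →L[ℝ] G}

/-- The family `w ↦ f (p, w)` solves, for each `p`, the first order linear system
`ℓ (D_w f) = 0` with constant coefficients. -/
def SolvesFibrewise (ℓ : (E →L[ℝ] F) →L[ℝ] G) (f : P × E → F) : Prop :=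
  ∀ p w, ℓ (fderiv ℝ (fun w => f (p, w)) w) = 0

/-- The system `ℓ` read off from the total derivative of a family on `P × E`. -/
def totalSystem (P : Type*) [NormedAddCommGroup P] [NormedSpace ℝ P]
    (ℓ : (E →L[ℝ] F) →L[ℝ] G) : (P × E →L[ℝ] F) →L[ℝ] G :=
  ℓ.comp ((ContinuousLinearMap.compL ℝ E (P × E) F).flip (.inr ℝ P E))

theorem totalSystem_fderiv [NormedAddCommGroup P] [NormedSpace ℝ P] {f : P × E → F}
    (hf : Differentiable ℝ f) (x : P × E) :
    totalSystem P ℓ (fderiv ℝ f x) = ℓ (fderiv ℝ (fun w => f (x.1, w)) x.2) :=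
  congrArg ℓ ((hf x).hasFDerivAt.comp x.2 (hasFDerivAt_prodMk_right x.1 x.2)).fderiv.symm

namespace SolvesFibrewise

theorem comp_fst {f : P × E → F} (hf : SolvesFibrewise ℓ f) (φ : Q → P) :
    SolvesFibrewise ℓ fun x : Q × E => f (φ x.1, x.2) :=
  fun p w => hf (φ p) w

theorem smul_fst {f : P × E → F} (hf : SolvesFibrewise ℓ f) (c : P → ℝ) :
    SolvesFibrewise ℓ fun x => c x.1 • f x := fun p w => by
  change ℓ (fderiv ℝ (c p • fun w => f (p, w)) w) = 0
  rw [fderiv_const_smul_field, Pi.smul_apply, map_smul, hf, smul_zero]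

variable [NormedAddCommGroup P] [NormedSpace ℝ P] {f g : P × E → F}

theorem fun_sub (hf : SolvesFibrewise ℓ f) (hg : SolvesFibrewise ℓ g) (hfs : Differentiable ℝ f)
    (hgs : Differentiable ℝ g) : SolvesFibrewise ℓ fun x => f x - g x := fun p w => by
  rw [fderiv_fun_sub (by fun_prop) (by fun_prop), map_sub, hf, hg, sub_zero]

theorem fun_sum {ι : Type*} {s : Finset ι} {f : ι → P × E → F}
    (hf : ∀ i ∈ s, SolvesFibrewise ℓ (f i)) (hfs : ∀ i ∈ s, Differentiable ℝ (f i)) :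
    SolvesFibrewise ℓ fun x => ∑ i ∈ s, f i x := fun p w => by
  rw [fderiv_fun_sum fun i hi => by have := hfs i hi; fun_prop, map_sum]
  exact Finset.sum_eq_zero fun i hi => hf i hi p w

theorem totalSystem_fderiv_eq_zero (hf : SolvesFibrewise ℓ f) (hfs : Differentiable ℝ f)
    (x : P × E) : totalSystem P ℓ (fderiv ℝ f x) = 0 :=
  (totalSystem_fderiv hfs x).trans (hf x.1 x.2)

theorem integral [CompleteSpace F] [CompleteSpace G] {T : Type*} [MeasurableSpace T]
    {μ : Measure T} {f : T → P × E → F} (hμ : Dominated μ f)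
    (hf : ∀ t, SolvesFibrewise ℓ (f t)) : SolvesFibrewise ℓ fun x => ∫ t, f t x ∂μ := fun p w => by
  rw [← totalSystem_fderiv (hμ.contDiff.differentiable (by simp)) (p, w), hμ.fderiv_integral,
    ← ContinuousLinearMap.integral_comp_comm _ (hμ.fderiv.integrable (p, w))]
  simp only [(hf _).totalSystem_fderiv_eq_zero ((hμ.smooth _).differentiable (by simp)),
    integral_zero]

/-- Differentiate `ℓ (D_w f) = 0` in the direction `v` of the base and use the symmetry of the
second derivative. -/
theorem fderiv_apply (hf : SolvesFibrewise ℓ f) (hfs : ContDiff ℝ ∞ f) (v : P) :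
    SolvesFibrewise ℓ fun x => fderiv ℝ f x (v, 0) := fun p w => by
  have hd : Differentiable ℝ (fderiv ℝ f) :=
    (hfs.fderiv_right (m := ∞) (by simp)).differentiable (by simp)
  have hzero : (fun x => totalSystem P ℓ (fderiv ℝ f x)) = fun _ => 0 :=
    funext (hf.totalSystem_fderiv_eq_zero (hfs.differentiable (by simp)))
  have hderiv : (totalSystem P ℓ).comp (fderiv ℝ (fderiv ℝ f) (p, w)) = 0 :=
    ((totalSystem P ℓ).hasFDerivAt.comp (p, w) (hd (p, w)).hasFDerivAt).unique
      (by rw [Function.comp_def, hzero]; exact hasFDerivAt_const 0 (p, w))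
  have hsymm : (fderiv ℝ (fderiv ℝ f) (p, w)).flip (v, 0)
      = fderiv ℝ (fderiv ℝ f) (p, w) (v, 0) :=
    ContinuousLinearMap.ext fun u => hfs.contDiffAt.isSymmSndFDerivAt
      (by
        rw [minSmoothness_of_isRCLikeNormedField]
        exact WithTop.coe_le_coe.2 (le_top : (2 : ℕ∞) ≤ ⊤)) u (v, 0)
  rw [← totalSystem_fderiv (hd.clm_apply (differentiable_const _)) (p, w),
    fderiv_clm_apply (hd _) (differentiableAt_const _)]
  simpa [hsymm] using congr($hderiv (v, 0))

end SolvesFibrewise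

/-- The partial derivative in the last coordinate of the base, for families on `(P × ℝ) × E`. -/
def offsetDeriv [NormedAddCommGroup P] [NormedSpace ℝ P] (f : (P × ℝ) × E → F) :
    (P × ℝ) × E → F :=
  fun x => fderiv ℝ f x ((0, 1), 0)

variable [NormedAddCommGroup P] [NormedSpace ℝ P] {f : (P × ℝ) × E → F}

theorem contDiff_offsetDeriv (hf : ContDiff ℝ ∞ f) : ContDiff ℝ ∞ (offsetDeriv f) :=
  (hf.fderiv_right (by simp)).clm_apply contDiff_const

theorem contDiff_iterate_offsetDeriv (hf : ContDiff ℝ ∞ f) (n : ℕ) :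
    ContDiff ℝ ∞ (offsetDeriv^[n] f) := by
  induction n generalizing f with
  | zero => exact hf
  | succ _ ih => exact ih (contDiff_offsetDeriv hf)

theorem SolvesFibrewise.iterate_offsetDeriv (hf : SolvesFibrewise ℓ f) (hfs : ContDiff ℝ ∞ f)
    (n : ℕ) : SolvesFibrewise ℓ (offsetDeriv^[n] f) := by
  induction n generalizing f with
  | zero => exact hf
  | succ _ ih => exact ih (hf.fderiv_apply hfs (0, 1)) (contDiff_offsetDeriv hfs)

theorem hasDerivAt_offset (hf : Differentiable ℝ f) (p : P) (s : ℝ) (w : E) :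
    HasDerivAt (fun s => f ((p, s), w)) (offsetDeriv f ((p, s), w)) s :=
  (hf _).hasFDerivAt.comp_hasDerivAt s
    (((hasDerivAt_const s p).prodMk (hasDerivAt_id s)).prodMk (hasDerivAt_const s w))

theorem iteratedDeriv_offset (hf : ContDiff ℝ ∞ f) (n : ℕ) (p : P) (w : E) :
    iteratedDeriv n (fun s => f ((p, s), w)) = fun s => offsetDeriv^[n] f ((p, s), w) := by
  induction n generalizing f with
  | zero => simp
  | succ n ih =>
    rw [iteratedDeriv_succ', Function.iterate_succ_apply, ← ih (contDiff_offsetDeriv hf)]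
    congr 1
    exact funext fun s => (hasDerivAt_offset (hf.differentiable (by simp)) p s w).deriv

end FibrewiseSystems

section Rotation

variable {V : Type*} [NormedAddCommGroup V] [NormedSpace ℝ V]

/-- Rotation by the angle `θ` in the plane spanned by the two summands of `V × V`. -/
def rot (θ : ℝ) : V × V →L[ℝ] V × V :=
  (Real.cos θ • ContinuousLinearMap.fst ℝ V V - Real.sin θ • ContinuousLinearMap.snd ℝ V V).prod
    (Real.sin θ • ContinuousLinearMap.fst ℝ V V + Real.cos θ • ContinuousLinearMap.snd ℝ V V)

theorem rot_apply (θ : ℝ) (v : V × V) :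
    rot θ v = (Real.cos θ • v.1 - Real.sin θ • v.2, Real.sin θ • v.1 + Real.cos θ • v.2) :=
  rfl

theorem rot_zero (v : V × V) : rot 0 v = v := by simp [rot_apply]

theorem rot_add (θ φ : ℝ) (v : V × V) : rot (θ + φ) v = rot θ (rot φ v) := by
  simp only [rot_apply, Real.cos_add, Real.sin_add]
  ext <;> simp only <;> module

theorem rot_add_pi (θ : ℝ) (v : V × V) : rot (θ + π) v = -rot θ v := by
  simp only [rot_apply, Real.cos_add_pi, Real.sin_add_pi]
  ext <;> simp only [Prod.fst_neg, Prod.snd_neg] <;> module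

theorem rot_pi (v : V × V) : rot π v = -v := by
  ext <;> simp [rot_apply]

theorem contDiff_rot : ContDiff ℝ ∞ fun p : ℝ × V × V => rot p.1 p.2 := by
  simp only [rot_apply]
  fun_prop

theorem norm_rot_le (θ : ℝ) (v : V × V) : ‖rot θ v‖ ≤ 2 * ‖v‖ := by
  have hbound {c : ℝ} (hc : |c| ≤ 1) {x : V} (hx : ‖x‖ ≤ ‖v‖) : ‖c • x‖ ≤ ‖v‖ := by
    rw [norm_smul, Real.norm_eq_abs]
    exact (mul_le_of_le_one_left (norm_nonneg x) hc).trans hx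
  have hcos := Real.abs_cos_le_one θ
  have hsin := Real.abs_sin_le_one θ
  rw [two_mul, rot_apply, Prod.norm_def]
  exact max_le
    ((norm_sub_le _ _).trans
      (add_le_add (hbound hcos (norm_fst_le v)) (hbound hsin (norm_snd_le v))))
    ((norm_add_le _ _).trans
      (add_le_add (hbound hsin (norm_fst_le v)) (hbound hcos (norm_snd_le v))))

theorem rot_neg_rot (θ : ℝ) (v : V × V) : rot (-θ) (rot θ v) = v := by
  rw [← rot_add, neg_add_cancel, rot_zero]

theorem rot_rot_neg (θ : ℝ) (v : V × V) : rot θ (rot (-θ) v) = v := by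
  rw [← rot_add, add_neg_cancel, rot_zero]

theorem norm_le_two_mul_norm_rot (θ : ℝ) (v : V × V) : ‖v‖ ≤ 2 * ‖rot θ v‖ := by
  simpa only [rot_neg_rot] using norm_rot_le (-θ) (rot θ v)

end Rotation

theorem locallyIntegrable_log_fst : LocallyIntegrable fun p : ℝ × ℝ => Real.log p.1 := by
  refine locallyIntegrable_iff.2 fun K hK => ?_
  obtain ⟨R, hR⟩ := hK.isBounded.subset_closedBall 0
  have hlog : IntegrableOn Real.log (Icc (-R) R) :=
    (integrableOn_Icc_iff_integrableOn_Ioc (by simp)).2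
      (intervalIntegral.intervalIntegrable_log' (a := -R) (b := R)).1
  have hprod : IntegrableOn (fun p : ℝ × ℝ => Real.log p.1) (Icc (-R) R ×ˢ Icc (-R) R) := by
    have : IsFiniteMeasure (volume.restrict (Icc (-R) R)) := ⟨by simp⟩
    rw [IntegrableOn, Measure.volume_eq_prod, ← Measure.prod_restrict]
    exact hlog.comp_fst _
  refine hprod.mono_set (hR.trans ?_)
  rw [show (0 : ℝ × ℝ) = (0, 0) from rfl, ← closedBall_prod_same, Real.closedBall_eq_Icc]
  simp

theorem hasCompactSupport_mk_right {X Y Z : Type*} [TopologicalSpace X] [TopologicalSpace Y]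
    [T2Space X] [T2Space Y] [Zero Z] {G : X × Y → Z} (hG : HasCompactSupport G) (y : Y) :
    HasCompactSupport fun x => G (x, y) :=
  hG.comp_isClosedEmbedding (g := fun x => (x, y))
    (Function.LeftInverse.isClosedEmbedding (f := Prod.fst) (fun _ => rfl) continuous_fst
      (by fun_prop))

section LogKernel

variable {F : Type*} [NormedAddCommGroup F] [NormedSpace ℝ F]

theorem integral_log_smul_deriv [CompleteSpace F] {f m : ℝ → F} (hf : ContDiff ℝ 1 f)
    (hm : Continuous m) (hmc : HasCompactSupport m) (hfm : ∀ t, f t = t • m t) :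
    ∫ t, Real.log t • deriv f t = -∫ t, m t := by
  have hfc : HasCompactSupport f := by
    simpa only [funext hfm] using! hmc.smul_left (f := fun t => t)
  obtain ⟨R, hR⟩ := (hmc.isCompact.isBounded.union hfc.isCompact.isBounded).subset_ball 0
  rw [Real.ball_eq_Ioo, zero_sub, zero_add, union_subset_iff] at hR
  have hmR (t : ℝ) (ht : t ∉ Ioo (-R) R) : m t = 0 := image_eq_zero_of_notMem_tsupport fun h =>
    ht (hR.1 h)
  have hlog : IntervalIntegrable (fun t => Real.log t • deriv f t) volume (-R) R :=
    intervalIntegral.intervalIntegrable_log'.smul_continuousOn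
      (hf.continuous_deriv le_rfl).continuousOn
  have hmi := hm.intervalIntegrable (μ := volume) (-R) R
  have key := integral_eq_of_hasDerivAt_off_countable (fun t => (t * Real.log t) • m t)
    (fun t => Real.log t • deriv f t + m t) (a := -R) (b := R) (countable_singleton 0)
    (Real.continuous_mul_log.smul hm).continuousOn (fun t ht => ?_) (hlog.add hmi)
  · rw [intervalIntegral.integral_add hlog hmi,
      intervalIntegral.integral_eq_integral_of_support_subset,
      intervalIntegral.integral_eq_integral_of_support_subset,
      hmR R (by simp), hmR (-R) (by simp), smul_zero, smul_zero, sub_zero] at key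
    · exact eq_neg_of_add_eq_zero_left key
    · exact (subset_tsupport m).trans (hR.1.trans Ioo_subset_Ioc_self)
    · exact (Function.support_smul_subset_right _ _).trans
        ((support_deriv_subset).trans (hR.2.trans Ioo_subset_Ioc_self))
  · have ht0 : t ≠ 0 := ht.2
    simp only [mul_comm _ (Real.log _), mul_smul, ← hfm]
    refine ((Real.hasDerivAt_log ht0).fun_smul
      ((hf.differentiable one_ne_zero) t).hasDerivAt).congr_deriv ?_
    rw [hfm, inv_smul_smul₀ ht0]

variable {G : ℝ × ℝ → F}

theorem fderiv_rot_of_radial (hG : Differentiable ℝ G) (hrad : ∀ θ v, G (rot θ v) = G v)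
    (θ : ℝ) (v u : ℝ × ℝ) : fderiv ℝ G (rot θ v) (rot θ u) = fderiv ℝ G v u := by
  have h := ((hG (rot θ v)).hasFDerivAt.comp v (rot θ : ℝ × ℝ →L[ℝ] ℝ × ℝ).hasFDerivAt).fderiv
  rw [show G ∘ ⇑(rot θ) = G from funext (hrad θ)] at h
  rw [h]
  rfl

theorem fderiv_tangential_of_radial (hG : Differentiable ℝ G)
    (hrad : ∀ θ v, G (rot θ v) = G v) (ρ : ℝ) : fderiv ℝ G (ρ, 0) (0, 1) = 0 := by
  rcases eq_or_ne ρ 0 with rfl | hρ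
  · have h := fderiv_rot_of_radial hG hrad π (0, 0) (0, 1)
    rw [rot_pi, rot_pi, Prod.mk_zero_zero, neg_zero, map_neg] at h
    linear_combination (norm := module) (-(1 / 2) : ℝ) • h
  · have hcurve : HasDerivAt (fun θ => rot θ (ρ, (0 : ℝ))) (0, ρ) 0 := by
      simp only [rot_apply]
      simpa using ((Real.hasDerivAt_cos 0).mul_const ρ).prodMk
        ((Real.hasDerivAt_sin 0).mul_const ρ)
    have h := (hG (rot 0 (ρ, 0))).hasFDerivAt.comp_hasDerivAt 0 hcurve
    simp only [Function.comp_def, hrad, rot_zero] at h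
    have hsmul : ((0, ρ) : ℝ × ℝ) = ρ • (0, 1) := by simp
    rw [hsmul, map_smul] at h
    exact (smul_eq_zero_iff_right hρ).1 (h.unique (hasDerivAt_const 0 (G (ρ, 0))))

theorem fderiv_rot_fst_of_radial (hG : Differentiable ℝ G)
    (hrad : ∀ θ v, G (rot θ v) = G v) (φ ρ : ℝ) :
    fderiv ℝ G (rot φ (ρ, 0)) (1, 0) = Real.cos φ • fderiv ℝ G (ρ, 0) (1, 0) := by
  have hsplit : rot (-φ) (1, (0 : ℝ)) = Real.cos φ • (1, 0) - Real.sin φ • (0, 1) := by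
    simp [rot_apply]
  have h := fderiv_rot_of_radial hG hrad φ (ρ, 0) (rot (-φ) (1, 0))
  rwa [← rot_add, add_neg_cancel, rot_zero, hsplit, map_sub, map_smul, map_smul,
    fderiv_tangential_of_radial hG hrad, smul_zero, sub_zero] at h

theorem fderiv_fst_of_radial_of_fst_eq_zero (hG : Differentiable ℝ G)
    (hrad : ∀ θ v, G (rot θ v) = G v) (r : ℝ) : fderiv ℝ G (0, r) (1, 0) = 0 := by
  simpa [rot_apply] using fderiv_rot_fst_of_radial hG hrad (π / 2) r

theorem ae_cos_ne_zero : ∀ᵐ φ : ℝ, Real.cos φ ≠ 0 := by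
  have hsub : {φ : ℝ | Real.cos φ = 0} ⊆ range fun k : ℤ => (2 * k + 1) * π / 2 := fun φ hφ =>
    (Real.cos_eq_zero_iff.1 hφ).imp fun k hk => hk.symm
  exact ((countable_range _).mono hsub).ae_notMem volume

/-- The quotient `∂₁G (t, r) / t`, written as an integral of `∂₁∂₁G` so that it is visibly
continuous across `t = 0` when `∂₁G (0, r) = 0`. -/
def fstDerivQuotient (G : ℝ × ℝ → F) (p : ℝ × ℝ) : F :=
  ∫ τ in (0 : ℝ)..1, fderiv ℝ (fun p => fderiv ℝ G p (1, 0)) (τ * p.1, p.2) (1, 0)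

theorem hasDerivAt_fst (hG : Differentiable ℝ G) (t r : ℝ) :
    HasDerivAt (fun t => G (t, r)) (fderiv ℝ G (t, r) (1, 0)) t :=
  (hG _).hasFDerivAt.comp_hasDerivAt t ((hasDerivAt_id t).prodMk (hasDerivAt_const t r))

theorem contDiff_fderiv_fst (hG : ContDiff ℝ ∞ G) :
    ContDiff ℝ ∞ fun p => fderiv ℝ G p (1, 0) :=
  (hG.fderiv_right (by simp)).clm_apply contDiff_const

theorem continuous_fstDerivQuotient (hG : ContDiff ℝ ∞ G) : Continuous (fstDerivQuotient G) :=
  intervalIntegral.continuous_parametric_intervalIntegral_of_continuous'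
    (f := fun (p : ℝ × ℝ) τ => fderiv ℝ (fun p => fderiv ℝ G p (1, 0)) (τ * p.1, p.2) (1, 0))
    ((contDiff_fderiv_fst (contDiff_fderiv_fst hG)).continuous.comp
      (by fun_prop : Continuous fun q : (ℝ × ℝ) × ℝ => (q.2 * q.1.1, q.1.2))) 0 1

theorem smul_fstDerivQuotient [CompleteSpace F] (hG : ContDiff ℝ ∞ G)
    (hrad : ∀ θ v, G (rot θ v) = G v) (p : ℝ × ℝ) :
    p.1 • fstDerivQuotient G p = fderiv ℝ G p (1, 0) := by
  have hG' := contDiff_fderiv_fst hG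
  have h := intervalIntegral.integral_eq_sub_of_hasDerivAt (a := 0) (b := 1)
    (fun τ _ => (hasDerivAt_fst (hG'.differentiable (by simp)) (τ * p.1) p.2).scomp τ
      (hasDerivAt_mul_const p.1)) (Continuous.intervalIntegrable (((contDiff_fderiv_fst
        hG').continuous.comp (by fun_prop)).const_smul _) _ _)
  rw [intervalIntegral.integral_smul] at h
  simpa [fstDerivQuotient, Function.comp_def, fderiv_fst_of_radial_of_fst_eq_zero
    (hG.differentiable (by simp)) hrad] using h

theorem hasCompactSupport_fstDerivQuotient [CompleteSpace F] (hG : ContDiff ℝ ∞ G)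
    (hGc : HasCompactSupport G) (hrad : ∀ θ v, G (rot θ v) = G v) :
    HasCompactSupport (fstDerivQuotient G) := by
  have hc1 := hGc.fderiv_apply ℝ (1, 0)
  have hc2 := hc1.fderiv_apply ℝ (1, 0)
  obtain ⟨R, hR0, hR⟩ := (hc1.isCompact.isBounded.union hc2.isCompact.isBounded).subset_ball_lt 0 0
  rw [union_subset_iff] at hR
  refine .intro (isCompact_closedBall 0 R) fun p hp => ?_
  rw [mem_closedBall_zero_iff, Prod.norm_def, max_le_iff, not_and_or, not_le, not_le] at hp
  rcases hp with hp | hp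
  · refine (smul_eq_zero_iff_right (norm_pos_iff.1 (hR0.trans hp))).1
      ((smul_fstDerivQuotient hG hrad p).trans (image_eq_zero_of_notMem_tsupport
        (f := fun p => fderiv ℝ G p (1, 0)) fun h => ?_))
    exact hp.not_ge ((norm_fst_le p).trans (mem_ball_zero_iff.1 (hR.1 h)).le)
  · refine intervalIntegral.integral_zero_ae (.of_forall fun τ _ =>
      image_eq_zero_of_notMem_tsupport
        (f := fun p => fderiv ℝ (fun p => fderiv ℝ G p (1, 0)) p (1, 0)) fun h => ?_)
    exact hp.not_ge ((norm_snd_le (τ * p.1, p.2)).trans (mem_ball_zero_iff.1 (hR.2 h)).le)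

theorem integral_fstDerivQuotient [CompleteSpace F] (hG : ContDiff ℝ ∞ G)
    (hGc : HasCompactSupport G) (hrad : ∀ θ v, G (rot θ v) = G v) :
    ∫ p, fstDerivQuotient G p = -(2 * π) • G 0 := by
  have hpolar (p : ℝ × ℝ) (hp : Real.cos p.2 ≠ 0) :
      p.1 • fstDerivQuotient G (polarCoord.symm p) = deriv (fun ρ => G (ρ, 0)) p.1 := by
    have h := smul_fstDerivQuotient hG hrad (rot p.2 (p.1, 0))
    rw [fderiv_rot_fst_of_radial (hG.differentiable (by simp)) hrad] at h
    rw [(hasDerivAt_fst (hG.differentiable (by simp)) p.1 0).deriv]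
    refine smul_right_injective F hp ?_
    simp [← h, rot_apply, smul_smul, mul_comm]
  have hg : ContDiff ℝ 1 fun ρ => G (ρ, 0) := hG.of_le (by simp) |>.comp (by fun_prop)
  have hgc : HasCompactSupport fun ρ => G (ρ, 0) :=
    hasCompactSupport_mk_right hGc 0
  calc ∫ p, fstDerivQuotient G p
      = ∫ p in Ioi 0 ×ˢ Ioo (-π) π, p.1 • fstDerivQuotient G (polarCoord.symm p) :=
        (integral_comp_polarCoord_symm _).symm
    _ = ∫ p in Ioi 0 ×ˢ Ioo (-π) π, deriv (fun ρ => G (ρ, 0)) p.1 :=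
        integral_congr_ae (ae_restrict_of_ae
          ((Measure.quasiMeasurePreserving_snd.ae ae_cos_ne_zero).mono hpolar))
    _ = (2 * π) • ∫ ρ in Ioi 0, deriv (fun ρ => G (ρ, 0)) ρ := by
        rw [Measure.volume_eq_prod, ← Measure.prod_restrict,
          integral_fun_fst (deriv fun ρ => G (ρ, 0)), measureReal_restrict_apply_univ,
          Real.volume_real_Ioo_of_le (by linarith [Real.pi_pos])]
        ring_nf
    _ = -(2 * π) • G 0 := by
        rw [hgc.integral_Ioi_deriv_eq hg, smul_neg, neg_smul, Prod.mk_zero_zero]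

theorem integral_log_smul_of_radial [CompleteSpace F] (hG : ContDiff ℝ ∞ G)
    (hGc : HasCompactSupport G) (hrad : ∀ θ v, G (rot θ v) = G v) :
    ∫ p : ℝ × ℝ, Real.log p.1 • iteratedDeriv 2 (fun t => G (t, p.2)) p.1 = (2 * π) • G 0 := by
  have hG' := contDiff_fderiv_fst hG
  have hfst (r : ℝ) : deriv (fun t => G (t, r)) = fun t => fderiv ℝ G (t, r) (1, 0) :=
    funext fun t => (hasDerivAt_fst (hG.differentiable (by simp)) t r).deriv
  have hsnd (p : ℝ × ℝ) : deriv (fun t => fderiv ℝ G (t, p.2) (1, 0)) p.1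
      = fderiv ℝ (fun p => fderiv ℝ G p (1, 0)) p (1, 0) :=
    (hasDerivAt_fst (hG'.differentiable (by simp)) p.1 p.2).deriv
  have hHc := hasCompactSupport_fstDerivQuotient hG hGc hrad
  simp only [iteratedDeriv_succ, iteratedDeriv_zero, hfst]
  rw [Measure.volume_eq_prod, integral_prod_symm]
  · calc ∫ r, ∫ t, Real.log t • deriv (fun t => fderiv ℝ G (t, r) (1, 0)) t
        = ∫ r, -∫ t, fstDerivQuotient G (t, r) := by
          congr! 2 with r
          exact integral_log_smul_deriv (hG'.of_le (by simp) |>.comp (by fun_prop))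
            ((continuous_fstDerivQuotient hG).comp (by fun_prop))
            (hasCompactSupport_mk_right hHc r)
            fun t => (smul_fstDerivQuotient hG hrad (t, r)).symm
      _ = -∫ p, fstDerivQuotient G p := by
          rw [integral_neg, Measure.volume_eq_prod, integral_prod_symm]
          exact (continuous_fstDerivQuotient hG).integrable_of_hasCompactSupport hHc
      _ = (2 * π) • G 0 := by rw [integral_fstDerivQuotient hG hGc hrad, neg_smul, neg_neg]
  · simp only [hsnd]
    exact locallyIntegrable_log_fst.integrable_smul_right_of_hasCompactSupport
      (contDiff_fderiv_fst hG').continuous ((hGc.fderiv_apply ℝ (1, 0)).fderiv_apply ℝ (1, 0))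

end LogKernel

theorem Dominated.iteratedDeriv_integral {T F : Type*} [MeasurableSpace T] [NormedAddCommGroup F]
    [NormedSpace ℝ F] {μ : Measure T} {f : T → ℝ → F} (h : Dominated μ f) (n : ℕ) (s : ℝ) :
    iteratedDeriv n (fun s => ∫ t, f t s ∂μ) s = ∫ t, iteratedDeriv n (f t) s ∂μ := by
  obtain ⟨B, hB, hle⟩ := h.bound n (‖s‖ + 1)
  have hint : Integrable (fun t => iteratedFDeriv ℝ n (f t) s) μ :=
    hB.mono' (h.meas n s) (hle.mono fun t ht => ht s (by linarith))
  simp only [iteratedDeriv_eq_iteratedFDeriv]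
  rw [← h.hasFTaylorSeriesUpTo.eq_iteratedFDeriv (mod_cast le_top),
    ContinuousMultilinearMap.integral_apply hint]

theorem Dominated.hasDerivAt_integral {T F : Type*} [MeasurableSpace T] [NormedAddCommGroup F]
    [NormedSpace ℝ F] {μ : Measure T} {f : T → ℝ → F} (h : Dominated μ f) (s : ℝ) :
    HasDerivAt (fun s => ∫ t, f t s ∂μ) (∫ t, deriv (f t) s ∂μ) s := by
  simpa only [← iteratedDeriv_one, ← h.iteratedDeriv_integral] using
    (h.contDiff.differentiable (by simp) s).hasDerivAt

theorem integrable_prod_smul_of_isCompact {T F : Type*} [TopologicalSpace T]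
    [SecondCountableTopology T] [T2Space T] [MeasurableSpace T] [BorelSpace T]
    {μ : Measure T} [SFinite μ] [NormedAddCommGroup F] [NormedSpace ℝ F] {κ : T → ℝ}
    (hκ : LocallyIntegrable κ μ) {g : ℝ × T → F} (hg : Continuous g) {K : Set T} (hK : IsCompact K)
    (h0 : ∀ t, ∀ x ∉ K, g (t, x) = 0) (a b : ℝ) :
    Integrable (fun p : ℝ × T => κ p.2 • g p) ((volume.restrict (Ioc a b)).prod μ) := by
  obtain ⟨C, hC⟩ := ((isCompact_Icc (a := a) (b := b)).prod hK).exists_bound_of_continuousOn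
    hg.continuousOn
  have hind : Integrable (K.indicator fun x => ‖κ x‖ * C) μ :=
    (integrable_indicator_iff hK.measurableSet).2
      ((hκ.integrableOn_isCompact hK).norm.mul_const C)
  refine (hind.comp_snd (volume.restrict (Ioc a b))).mono'
    (hκ.aestronglyMeasurable.comp_snd.smul hg.aestronglyMeasurable) ?_
  filter_upwards [Measure.quasiMeasurePreserving_fst.ae (ae_restrict_mem measurableSet_Ioc)]
    with p hp
  by_cases hx : p.2 ∈ K
  · rw [indicator_of_mem hx, norm_smul]
    exact mul_le_mul_of_nonneg_left (hC p ⟨Ioc_subset_Icc_self hp, hx⟩) (norm_nonneg _)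
  · rw [indicator_of_notMem hx, h0 p.1 p.2 hx, smul_zero, norm_zero]

section Periodic

variable {F : Type*} [NormedAddCommGroup F] [NormedSpace ℝ F] {g : ℝ → F}

theorem integral_comp_add_of_periodic (hg : Function.Periodic g (2 * π)) (c : ℝ) :
    ∫ t in 0..2 * π, g (t + c) = ∫ t in 0..2 * π, g t := by
  simpa [add_comm] using hg.intervalIntegral_add_eq c 0

theorem integral_comp_neg_of_periodic (hg : Function.Periodic g (2 * π)) :
    ∫ t in 0..2 * π, g (-t) = ∫ t in 0..2 * π, g t := by
  simpa using hg.intervalIntegral_add_eq (-(2 * π)) 0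

end Periodic

theorem translate_rot_eq_zero {F : Type*} [Zero F] {f : ℝ × ℝ → F} {M : ℝ}
    (hfM : ∀ v, M < ‖v‖ → f v = 0) {v x : ℝ × ℝ}
    (hx : 2 * (M + ‖v‖) < ‖x‖) (θ : ℝ) : f (v + rot θ x) = 0 := by
  refine hfM _ ?_
  have htri := norm_sub_le (v + rot θ x) v
  rw [add_sub_cancel_left] at htri
  linarith [norm_le_two_mul_norm_rot θ x]

section DualRadon

variable {E F G : Type*} [NormedAddCommGroup E] [NormedSpace ℝ E] [NormedAddCommGroup F]
  [NormedSpace ℝ F] [NormedAddCommGroup G] [NormedSpace ℝ G] {ℓ : (E →L[ℝ] F) →L[ℝ] G}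

/-- The dual Radon transform (backprojection), with parameters `w`: the integral of `q` over all
lines through the point `v` of the plane. The point `((θ, s), w)` stands for the line with normal
direction `θ` and signed distance `s` from the origin. -/
def dualRadon (q : (ℝ × ℝ) × E → F) (v : ℝ × ℝ) (w : E) : F :=
  ∫ θ in 0..2 * π, q ((θ, (rot (-θ) v).1), w)

/-- A smooth function on the space of lines in the plane, with parameters: `(θ, s)` and
`(θ + π, -s)` describe the same line. -/
structure IsLineFunction (q : (ℝ × ℝ) × E → F) : Prop where
  smooth : ContDiff ℝ ∞ q
  symm : ∀ θ s w, q ((θ + π, -s), w) = q ((θ, s), w)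

/-- The family `f` in the frame rotated by `θ`: the base is `(θ, r)` and the last coordinate of
the point `(t, r)` is `t`, so that `offsetDeriv` is `∂/∂t`. -/
def rotated (f : (ℝ × ℝ) × E → F) : ((ℝ × ℝ) × ℝ) × E → F :=
  fun x => f (rot x.1.1.1 (x.1.2, x.1.1.2), x.2)

/-- The inversion formula `(4π²)⁻¹ ∫ log |t| ∂ₛ² Rf (θ, s + t) dt` for the dual Radon transform,
where `Rf (θ, s)` is the integral of `f` over the line `(θ, s)`; `Real.log` is `log |·|`. -/
def radonInverse (f : (ℝ × ℝ) × E → F) : (ℝ × ℝ) × E → F :=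
  fun x => (4 * π ^ 2)⁻¹ •
    ∫ p : ℝ × ℝ, Real.log p.1 • offsetDeriv^[2] (rotated f) (((x.1.1, p.2), x.1.2 + p.1), x.2)

variable {f : (ℝ × ℝ) × E → F} {M : ℝ}

theorem contDiff_rotated (hf : ContDiff ℝ ∞ f) : ContDiff ℝ ∞ (rotated f) :=
  hf.comp ((contDiff_rot.comp (by fun_prop :
    ContDiff ℝ ∞ fun x : ((ℝ × ℝ) × ℝ) × E => (x.1.1.1, x.1.2, x.1.1.2))).prodMk contDiff_snd)

theorem iterate_offsetDeriv_eq_zero {P : Type*} [NormedAddCommGroup P] [NormedSpace ℝ P]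
    {f : (P × ℝ) × E → F} {U : Set ((P × ℝ) × E)} (hU : IsOpen U) (hf : ∀ x ∈ U, f x = 0)
    (n : ℕ) : ∀ x ∈ U, offsetDeriv^[n] f x = 0 := by
  induction n generalizing f with
  | zero => exact hf
  | succ _ ih =>
    refine ih fun x hx => ?_
    have hzero : f =ᶠ[𝓝 x] fun _ => 0 := mem_of_superset (hU.mem_nhds hx) hf
    simp [offsetDeriv, hzero.fderiv_eq]

theorem iterate_offsetDeriv_rotated_eq_zero (hfM : ∀ v w, M < ‖v‖ → f (v, w) = 0) (n : ℕ)
    {θ r t : ℝ} (h : 2 * M < ‖(t, r)‖) (w : E) :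
    offsetDeriv^[n] (rotated f) (((θ, r), t), w) = 0 := by
  refine iterate_offsetDeriv_eq_zero (U := {x : ((ℝ × ℝ) × ℝ) × E | 2 * M < ‖(x.1.2, x.1.1.2)‖})
    (isOpen_lt continuous_const (by fun_prop)) (fun x hx => hfM _ _ ?_) n _ h
  linarith [norm_le_two_mul_norm_rot x.1.1.1 (x.1.2, x.1.1.2), mem_ofPred.1 hx]

theorem dominated_radonInverse [FiniteDimensional ℝ E] (hf : ContDiff ℝ ∞ f)
    (hfM : ∀ v w, M < ‖v‖ → f (v, w) = 0) :
    Dominated volume fun (p : ℝ × ℝ) (x : (ℝ × ℝ) × E) => Real.log p.1 •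
      offsetDeriv^[2] (rotated f) (((x.1.1, p.2), x.1.2 + p.1), x.2) := by
  refine .of_compact (f := fun (p : ℝ × ℝ) (x : (ℝ × ℝ) × E) =>
      offsetDeriv^[2] (rotated f) (((x.1.1, p.2), x.1.2 + p.1), x.2))
    ((contDiff_iterate_offsetDeriv (contDiff_rotated hf) 2).comp
    (by fun_prop : ContDiff ℝ ∞ fun z : (ℝ × ℝ) × (ℝ × ℝ) × E =>
      (((z.2.1.1, z.1.2), z.2.1.2 + z.1.1), z.2.2))) locallyIntegrable_log_fst
    fun R => ⟨closedBall 0 (2 * M + R), isCompact_closedBall _ _, .of_forall fun p hp x hx =>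
      iterate_offsetDeriv_rotated_eq_zero hfM 2 ?_ x.2⟩
  rw [mem_closedBall_zero_iff, not_le] at hp
  have hs : ‖((x.1.2, 0) : ℝ × ℝ)‖ ≤ ‖x‖ := by
    simpa using (norm_snd_le x.1).trans (norm_fst_le x)
  have htri := norm_sub_le (x.1.2 + p.1, p.2) (x.1.2, (0 : ℝ))
  rw [Prod.mk_sub_mk, add_sub_cancel_left, sub_zero, Prod.mk.eta] at htri
  linarith

theorem solvesFibrewise_radonInverse [FiniteDimensional ℝ E] [CompleteSpace F] [CompleteSpace G]
    (hf : ContDiff ℝ ∞ f) (hfM : ∀ v w, M < ‖v‖ → f (v, w) = 0) (hℓ : SolvesFibrewise ℓ f) :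
    SolvesFibrewise ℓ (radonInverse f) := by
  refine SolvesFibrewise.smul_fst (.integral (dominated_radonInverse hf hfM) fun p => ?_)
    fun _ => (4 * π ^ 2)⁻¹
  have hrot : SolvesFibrewise ℓ (rotated f) :=
    hℓ.comp_fst fun x : (ℝ × ℝ) × ℝ => rot x.1.1 (x.2, x.1.2)
  exact ((hrot.iterate_offsetDeriv (contDiff_rotated hf) 2).comp_fst
    fun x : ℝ × ℝ => ((x.1, p.2), x.2 + p.1)).smul_fst fun _ => Real.log p.1

theorem iterate_offsetDeriv_rotated (hf : ContDiff ℝ ∞ f) (n : ℕ) (θ r t : ℝ) (w : E) :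
    offsetDeriv^[n] (rotated f) (((θ, r), t), w)
      = iteratedDeriv n (fun t => f (rot θ (t, r), w)) t :=
  (congrFun (iteratedDeriv_offset (contDiff_rotated hf) n (θ, r) w) t).symm

theorem isLineFunction_radonInverse [FiniteDimensional ℝ E] (hf : ContDiff ℝ ∞ f)
    (hfM : ∀ v w, M < ‖v‖ → f (v, w) = 0) : IsLineFunction (radonInverse f) where
  smooth := contDiff_const.smul (dominated_radonInverse hf hfM).contDiff
  symm θ s w := by
    have hreflect (r t : ℝ) : offsetDeriv^[2] (rotated f) (((θ + π, r), t), w)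
        = offsetDeriv^[2] (rotated f) (((θ, -r), -t), w) := by
      simp only [iterate_offsetDeriv_rotated hf, rot_add_pi, ← map_neg, Prod.neg_mk]
      rw [iteratedDeriv_comp_neg 2 fun t => f (rot θ (t, -r), w)]
      simp
    simp only [radonInverse, hreflect]
    rw [← integral_neg_eq_self]
    simp [add_comm]

theorem integral_comp_add_rot_rot (f : ℝ × ℝ → F) (v : ℝ × ℝ) (φ : ℝ) (x : ℝ × ℝ) :
    ∫ θ in 0..2 * π, f (v + rot θ (rot φ x)) = ∫ θ in 0..2 * π, f (v + rot θ x) := by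
  simp only [← rot_add]
  have hper : Function.Periodic (fun θ => f (v + rot θ x)) (2 * π) := fun θ => by
    simp only [two_mul, ← add_assoc, rot_add_pi, neg_neg]
  exact integral_comp_add_of_periodic hper φ

section Inversion

variable {f : ℝ × ℝ → F}

theorem contDiff_translate_rot (hf : ContDiff ℝ ∞ f) (v : ℝ × ℝ) :
    ContDiff ℝ ∞ fun p : ℝ × ℝ × ℝ => f (v + rot p.1 p.2) :=
  hf.comp (contDiff_const.add contDiff_rot)

theorem integrable_log_smul_iteratedDeriv_rot (hf : ContDiff ℝ ∞ f)
    (hfM : ∀ v, M < ‖v‖ → f v = 0) (v : ℝ × ℝ) (a b : ℝ) (n : ℕ) :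
    Integrable (fun x : ℝ × ℝ × ℝ => Real.log x.2.1 •
      iteratedDeriv n (fun t => f (v + rot x.1 (t, x.2.2))) x.2.1)
      ((volume.restrict (Ioc a b)).prod volume) := by
  have hcurve : ContDiff ℝ ∞
      (Function.uncurry fun (y : ℝ × ℝ) t => f (v + rot y.1 (t, y.2))) := by
    have h := (contDiff_translate_rot hf v).comp (by fun_prop :
      ContDiff ℝ ∞ fun z : (ℝ × ℝ) × ℝ => (z.1.1, z.2, z.1.2))
    exact h
  have hcont : Continuous fun x : ℝ × ℝ × ℝ =>
      iteratedDeriv n (fun t => f (v + rot x.1 (t, x.2.2))) x.2.1 := by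
    have h := (contDiff_iteratedDeriv_param hcurve n).continuous.comp (by fun_prop :
      Continuous fun x : ℝ × ℝ × ℝ => ((x.1, x.2.2), x.2.1))
    exact h
  refine integrable_prod_smul_of_isCompact (κ := fun p : ℝ × ℝ => Real.log p.1)
    (g := fun x : ℝ × ℝ × ℝ => iteratedDeriv n (fun t => f (v + rot x.1 (t, x.2.2))) x.2.1)
    locallyIntegrable_log_fst hcont (isCompact_closedBall 0 (2 * (M + ‖v‖))) (fun θ p hp => ?_) a b
  rw [mem_closedBall_zero_iff, not_le] at hp
  have hzero : (fun t => f (v + rot θ (t, p.2))) =ᶠ[𝓝 p.1] fun _ => 0 := by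
    filter_upwards [(isOpen_lt (continuous_const (y := 2 * (M + ‖v‖)))
      (by fun_prop : Continuous fun t : ℝ => ‖(t, p.2)‖)).mem_nhds hp] with t ht
    exact translate_rot_eq_zero hfM ht θ
  simp [hzero.iteratedDeriv_eq n]

theorem integral_log_smul_iteratedDeriv_rot [CompleteSpace F] (hf : ContDiff ℝ ∞ f)
    (hfM : ∀ v, M < ‖v‖ → f v = 0) (v : ℝ × ℝ) :
    ∫ θ in 0..2 * π, ∫ p : ℝ × ℝ,
      Real.log p.1 • iteratedDeriv 2 (fun t => f (v + rot θ (t, p.2))) p.1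
      = (4 * π ^ 2) • f v := by
  have hcurve := contDiff_translate_rot hf v
  have hGc : HasCompactSupport fun x => ∫ θ in 0..2 * π, f (v + rot θ x) :=
    .intro (isCompact_closedBall 0 (2 * (M + ‖v‖))) fun x hx =>
      intervalIntegral.integral_zero_ae (.of_forall fun θ _ =>
        translate_rot_eq_zero hfM (by simpa using hx) θ)
  have hderiv (p : ℝ × ℝ) :
      iteratedDeriv 2 (fun t => ∫ θ in 0..2 * π, f (v + rot θ (t, p.2))) p.1
        = ∫ θ in 0..2 * π, iteratedDeriv 2 (fun t => f (v + rot θ (t, p.2))) p.1 := by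
    simp only [intervalIntegral.integral_of_le Real.two_pi_pos.le]
    have hline : ContDiff ℝ ∞ (Function.uncurry fun θ t => f (v + rot θ (t, p.2))) := by
      have h := hcurve.comp (by fun_prop : ContDiff ℝ ∞ fun z : ℝ × ℝ => (z.1, z.2, p.2))
      exact h
    exact (Dominated.of_Ioc hline 0 (2 * π)).iteratedDeriv_integral 2 p.1
  rw [intervalIntegral_integral_swap]
  · simp only [intervalIntegral.integral_smul, ← hderiv]
    rw [integral_log_smul_of_radial
      (contDiff_intervalIntegral (f := fun θ x => f (v + rot θ x)) hcurve Real.two_pi_pos.le) hGc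
      (integral_comp_add_rot_rot f v)]
    simp only [map_zero, add_zero, intervalIntegral.integral_const, smul_smul]
    ring_nf
  · rw [uIoc_of_le Real.two_pi_pos.le]
    exact integrable_log_smul_iteratedDeriv_rot hf hfM v _ _ 2

end Inversion

theorem dualRadon_radonInverse [FiniteDimensional ℝ E] [CompleteSpace F] (hf : ContDiff ℝ ∞ f)
    (hfM : ∀ v w, M < ‖v‖ → f (v, w) = 0) (v : ℝ × ℝ) (w : E) :
    dualRadon (radonInverse f) v w = f (v, w) := by
  have htranslate (θ : ℝ) :
      ∫ p : ℝ × ℝ, Real.log p.1 •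
        offsetDeriv^[2] (rotated f) (((θ, p.2), (rot (-θ) v).1 + p.1), w)
      = ∫ p : ℝ × ℝ,
        Real.log p.1 • iteratedDeriv 2 (fun t => f (v + rot θ (t, p.2), w)) p.1 := by
    rw [← integral_add_right_eq_self _ ((0, (rot (-θ) v).2) : ℝ × ℝ)]
    refine integral_congr_ae (.of_forall fun p => ?_)
    beta_reduce
    rw [iterate_offsetDeriv_rotated hf, Prod.fst_add, Prod.snd_add, add_zero,
      ← congrFun (iteratedDeriv_comp_const_add 2 _ _) p.1]
    congr! 4 with t
    rw [add_comm p.2, ← Prod.mk_add_mk, map_add, Prod.mk.eta, rot_rot_neg]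
  have hfw : ContDiff ℝ ∞ fun v => f (v, w) := hf.comp (contDiff_prodMk_left w)
  simp only [dualRadon, radonInverse, htranslate]
  rw [intervalIntegral.integral_smul,
    integral_log_smul_iteratedDeriv_rot hfw (fun v => hfM v w) v,
    inv_smul_smul₀ (by positivity)]

end DualRadon

section ArchimedesHatBox

/-- The integral over the unit sphere of the function `x ↦ g (x₁)`, in spherical coordinates
whose polar axis is orthogonal to the first coordinate axis. -/
def sphereIntegral (g : ℝ → ℝ) : ℝ :=
  ∫ ψ in 0..π, Real.sin ψ * ∫ θ in 0..2 * π, g (Real.sin ψ * Real.cos θ)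

theorem wallis_product (n : ℕ) :
    (n + 1) * ((∫ x in 0..π, Real.sin x ^ n) * ∫ x in 0..π, Real.sin x ^ (n + 1)) = 2 * π := by
  induction n with
  | zero => norm_num [mul_comm]
  | succ n ih =>
    rw [integral_sin_pow (n := n), ← ih]
    simp only [Real.sin_zero, Real.sin_pi]
    push_cast
    field_simp
    ring

theorem integral_cos_pow_eq_sin_pow (n : ℕ) :
    ∫ θ in 0..2 * π, Real.cos θ ^ n = (1 + (-1) ^ n) * ∫ θ in 0..π, Real.sin θ ^ n := by
  have hcont : Continuous fun θ => Real.sin θ ^ n := by fun_prop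
  have hper : Function.Periodic (fun θ => Real.sin θ ^ n) (2 * π) := fun θ => by simp
  have hhalf : ∫ θ in π..π + π, Real.sin θ ^ n = (-1) ^ n * ∫ θ in 0..π, Real.sin θ ^ n := by
    have h := intervalIntegral.integral_comp_add_right (a := 0) (b := π)
      (fun θ => Real.sin θ ^ n) π
    rw [zero_add] at h
    rw [← h, ← intervalIntegral.integral_const_mul]
    simp only [Real.sin_add_pi, neg_pow (Real.sin _)]
  simp only [← Real.sin_add_pi_div_two]
  rw [intervalIntegral.integral_comp_add_right (fun θ => Real.sin θ ^ n), zero_add,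
    add_comm (2 * π), hper.intervalIntegral_add_eq (π / 2) 0, zero_add,
    ← intervalIntegral.integral_add_adjacent_intervals (hcont.intervalIntegrable 0 π)
      (hcont.intervalIntegrable _ _), two_mul, hhalf]
  ring

theorem sphereIntegral_pow (n : ℕ) :
    sphereIntegral (fun x => x ^ n) = 2 * π * ∫ x in (-1 : ℝ)..1, x ^ n := by
  simp only [sphereIntegral, mul_pow, intervalIntegral.integral_const_mul, ← mul_assoc,
    ← pow_succ', intervalIntegral.integral_mul_const]
  rw [integral_cos_pow_eq_sin_pow, integral_pow, ← wallis_product n, one_pow, pow_succ]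
  field_simp
  ring

theorem continuous_integral_mul_cos {g : ℝ → ℝ} (hg : Continuous g) :
    Continuous fun ψ => Real.sin ψ * ∫ θ in 0..2 * π, g (Real.sin ψ * Real.cos θ) :=
  Real.continuous_sin.mul (intervalIntegral.continuous_parametric_intervalIntegral_of_continuous'
    (f := fun ψ θ => g (Real.sin ψ * Real.cos θ)) (hg.comp (by fun_prop)) 0 (2 * π))

theorem sphereIntegral_add {g h : ℝ → ℝ} (hg : Continuous g) (hh : Continuous h) :
    sphereIntegral (fun x => g x + h x) = sphereIntegral g + sphereIntegral h := by
  have hadd (ψ : ℝ) : ∫ θ in 0..2 * π, (g (Real.sin ψ * Real.cos θ) + h (Real.sin ψ * Real.cos θ))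
      = (∫ θ in 0..2 * π, g (Real.sin ψ * Real.cos θ))
        + ∫ θ in 0..2 * π, h (Real.sin ψ * Real.cos θ) :=
    intervalIntegral.integral_add ((hg.comp (by fun_prop)).intervalIntegrable _ _)
      ((hh.comp (by fun_prop)).intervalIntegrable _ _)
  simp only [sphereIntegral, hadd, mul_add]
  exact intervalIntegral.integral_add ((continuous_integral_mul_cos hg).intervalIntegrable _ _)
    ((continuous_integral_mul_cos hh).intervalIntegrable _ _)

theorem sphereIntegral_const_mul (c : ℝ) (g : ℝ → ℝ) :
    sphereIntegral (fun x => c * g x) = c * sphereIntegral g := by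
  simp only [sphereIntegral, intervalIntegral.integral_const_mul, mul_left_comm _ c]

theorem abs_sphereIntegral_le {g : ℝ → ℝ} {C : ℝ} (hC : ∀ x ∈ Icc (-1) 1, |g x| ≤ C) :
    |sphereIntegral g| ≤ 2 * π ^ 2 * C := by
  have hinner (ψ : ℝ) : ‖∫ θ in 0..2 * π, g (Real.sin ψ * Real.cos θ)‖ ≤ C * (2 * π) := by
    have h := intervalIntegral.norm_integral_le_of_norm_le_const (a := 0) (b := 2 * π) (C := C)
      (f := fun θ => g (Real.sin ψ * Real.cos θ)) fun θ _ => hC _ (abs_le.1 ?_)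
    · rwa [sub_zero, abs_of_pos Real.two_pi_pos] at h
    rw [abs_mul]
    exact mul_le_one₀ (Real.abs_sin_le_one ψ) (abs_nonneg _) (Real.abs_cos_le_one θ)
  have h := intervalIntegral.norm_integral_le_of_norm_le_const (a := 0) (b := π)
    (C := C * (2 * π)) (f := fun ψ => Real.sin ψ * ∫ θ in 0..2 * π, g (Real.sin ψ * Real.cos θ))
    fun ψ _ => ?_
  · rw [sub_zero, abs_of_pos Real.pi_pos] at h
    exact h.trans_eq (by ring)
  rw [norm_mul]
  exact (mul_le_of_le_one_left (norm_nonneg _) (Real.abs_sin_le_one ψ)).trans (hinner ψ)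

theorem sphereIntegral_polynomial (p : Polynomial ℝ) :
    sphereIntegral (fun x => p.eval x) = 2 * π * ∫ x in (-1 : ℝ)..1, p.eval x := by
  induction p using Polynomial.induction_on' with
  | add p q hp hq =>
    simp only [Polynomial.eval_add]
    rw [sphereIntegral_add p.continuous q.continuous, hp, hq, intervalIntegral.integral_add
      (p.continuous.intervalIntegrable _ _) (q.continuous.intervalIntegrable _ _), mul_add]
  | monomial n c =>
    simp only [Polynomial.eval_monomial]
    rw [sphereIntegral_const_mul, sphereIntegral_pow, intervalIntegral.integral_const_mul,
      mul_left_comm]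

theorem sphereIntegral_eq_integral {g : ℝ → ℝ} (hg : Continuous g) :
    sphereIntegral g = 2 * π * ∫ x in (-1 : ℝ)..1, g x := by
  have hclose (ε : ℝ) (hε : 0 < ε) :
      |sphereIntegral g - 2 * π * ∫ x in (-1 : ℝ)..1, g x| ≤ (2 * π ^ 2 + 4 * π) * ε := by
    obtain ⟨p, hp⟩ := exists_polynomial_near_of_continuousOn (-1) 1 g hg.continuousOn ε hε
    have hd : Continuous fun x => g x - p.eval x := hg.sub p.continuous
    have hsphere : sphereIntegral g
        = sphereIntegral (fun x => g x - p.eval x) + sphereIntegral fun x => p.eval x := by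
      rw [← sphereIntegral_add hd p.continuous]
      simp only [sub_add_cancel]
    have hle (x : ℝ) (hx : x ∈ Icc (-1) 1) : |g x - p.eval x| ≤ ε := by
      rw [abs_sub_comm]
      exact (hp x hx).le
    have hint : |∫ x in (-1 : ℝ)..1, (g x - p.eval x)| ≤ ε * 2 := by
      have h := intervalIntegral.norm_integral_le_of_norm_le_const (a := -1) (b := 1) (C := ε)
        (f := fun x => g x - p.eval x) fun x hx => hle x ?_
      · norm_num at h
        exact h
      rw [uIoc_of_le (by norm_num)] at hx
      exact Ioc_subset_Icc_self hx
    have h1 := abs_le.1 (abs_sphereIntegral_le hle)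
    have h2 := abs_le.1 hint
    rw [intervalIntegral.integral_sub (hg.intervalIntegrable _ _)
      (p.continuous.intervalIntegrable _ _)] at h2
    rw [hsphere, sphereIntegral_polynomial, abs_le]
    constructor <;> nlinarith [Real.pi_pos]
  refine sub_eq_zero.1 (abs_nonpos_iff.1 (le_of_forall_pos_le_add fun δ hδ => ?_))
  have hpos : 0 < 2 * π ^ 2 + 4 * π := by positivity
  rw [zero_add, ← mul_div_cancel₀ δ hpos.ne']
  exact hclose _ (div_pos hδ hpos)

theorem eq_zero_of_integral_comp_mul_cos {a : ℝ → ℝ} (ha : Continuous a) (heven : ∀ s, a (-s) = a s)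
    {σ : ℝ} (h : ∀ r ≠ 0, |r| < σ → ∫ θ in 0..2 * π, a (r * Real.cos θ) = 0) {s : ℝ}
    (hs : |s| < σ) : a s = 0 := by
  have hprim (t : ℝ) (ht : |t| < σ) : ∫ x in 0..t, a x = 0 := by
    rcases eq_or_ne t 0 with rfl | ht0
    · exact intervalIntegral.integral_same
    have hsphere : sphereIntegral (fun x => a (t * x)) = 0 := by
      refine intervalIntegral.integral_zero_ae (.of_forall fun ψ _ => mul_eq_zero.2 ?_)
      refine or_iff_not_imp_left.2 fun hψ => ?_
      simp only [← mul_assoc]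
      refine h _ (mul_ne_zero ht0 hψ) ?_
      rw [abs_mul]
      exact (mul_le_of_le_one_right (abs_nonneg t) (Real.abs_sin_le_one ψ)).trans_lt ht
    have hat : Continuous fun x => a (t * x) := ha.comp (by fun_prop)
    rw [sphereIntegral_eq_integral hat, ← intervalIntegral.integral_add_adjacent_intervals (b := 0)
      (hat.intervalIntegrable _ _) (hat.intervalIntegrable _ _)] at hsphere
    have hneg : ∫ x in (-1 : ℝ)..0, a (t * x) = ∫ x in (0 : ℝ)..1, a (t * x) := by
      have h := intervalIntegral.integral_comp_neg (a := 0) (b := 1) fun x => a (t * x)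
      simpa only [mul_neg, heven, neg_zero] using h.symm
    rw [hneg, ← two_mul, intervalIntegral.integral_comp_mul_left _ ht0, mul_zero, mul_one]
      at hsphere
    simpa [ht0, Real.pi_ne_zero] using hsphere
  have hderiv := intervalIntegral.integral_hasDerivAt_right (ha.intervalIntegrable 0 s)
    (ha.stronglyMeasurableAtFilter _ _) ha.continuousAt
  refine hderiv.unique ((hasDerivAt_const s (0 : ℝ)).congr_of_eventuallyEq ?_)
  filter_upwards [(isOpen_lt continuous_abs continuous_const).mem_nhds hs] with t ht
  exact hprim t ht

end ArchimedesHatBox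

section CosineMoments

variable {F : Type*} [NormedAddCommGroup F] [NormedSpace ℝ F] {a : ℝ → F} {σ : ℝ}

theorem hasDerivAt_integral_cos_smul (ha : ContDiff ℝ ∞ a) (m : ℕ) (r : ℝ) :
    HasDerivAt (fun r => ∫ θ in 0..2 * π, Real.cos (m * θ) • a (r * Real.cos θ))
      (∫ θ in 0..2 * π, (Real.cos (m * θ) * Real.cos θ) • deriv a (r * Real.cos θ)) r := by
  have hsmooth : ContDiff ℝ ∞ (Function.uncurry fun θ r => Real.cos (m * θ) • a (r * Real.cos θ)) :=
    ContDiff.smul (f := fun p : ℝ × ℝ => Real.cos (m * p.1)) (by fun_prop)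
      (ha.comp (by fun_prop))
  have h := (Dominated.of_Ioc hsmooth 0 (2 * π)).hasDerivAt_integral r
  have hd (θ : ℝ) : deriv (fun r => Real.cos (m * θ) • a (r * Real.cos θ)) r
      = (Real.cos (m * θ) * Real.cos θ) • deriv a (r * Real.cos θ) := by
    have ha' := (ha.differentiable (by simp) (r * Real.cos θ)).hasDerivAt.scomp r
      (hasDerivAt_mul_const (Real.cos θ))
    rw [mul_smul]
    exact (ha'.const_smul (Real.cos (m * θ))).deriv
  simpa only [intervalIntegral.integral_of_le Real.two_pi_pos.le, hd] using h

theorem smul_integral_cos_smul [CompleteSpace F] (ha : ContDiff ℝ ∞ a) (m : ℕ) (r : ℝ) :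
    (m : ℝ) • ∫ θ in 0..2 * π, Real.cos (m * θ) • a (r * Real.cos θ)
      = r • ∫ θ in 0..2 * π, (Real.sin (m * θ) * Real.sin θ) • deriv a (r * Real.cos θ) := by
  have ha' : Continuous (deriv a) := ha.continuous_deriv (by simp)
  have hd (θ : ℝ) : HasDerivAt (fun θ => Real.sin (m * θ) • a (r * Real.cos θ))
      ((m : ℝ) • Real.cos (m * θ) • a (r * Real.cos θ)
        - r • (Real.sin (m * θ) * Real.sin θ) • deriv a (r * Real.cos θ)) θ := by
    have h := ((hasDerivAt_const_mul (m : ℝ)).sin (x := θ)).smul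
      ((ha.differentiable (by simp) (r * Real.cos θ)).hasDerivAt.scomp θ
        ((Real.hasDerivAt_cos θ).const_mul r))
    exact h.congr_deriv (by simp only [Function.comp_apply]; module)
  have h1 : Continuous fun θ => (m : ℝ) • Real.cos (m * θ) • a (r * Real.cos θ) :=
    ((by fun_prop : Continuous fun θ => Real.cos (m * θ)).smul
      (ha.continuous.comp (by fun_prop))).const_smul _
  have h2 : Continuous fun θ =>
      r • (Real.sin (m * θ) * Real.sin θ) • deriv a (r * Real.cos θ) :=
    ((by fun_prop : Continuous fun θ => Real.sin (m * θ) * Real.sin θ).smul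
      (ha'.comp (by fun_prop))).const_smul r
  have h := intervalIntegral.integral_eq_sub_of_hasDerivAt (fun θ _ => hd θ)
    ((h1.sub h2).intervalIntegrable 0 (2 * π))
  rw [intervalIntegral.integral_sub (h1.intervalIntegrable _ _) (h2.intervalIntegrable _ _),
    intervalIntegral.integral_smul, intervalIntegral.integral_smul, mul_zero,
    Real.sin_zero, ← sub_zero ((m : ℝ) * (2 * π)), Real.sin_nat_mul_two_pi_sub, Real.sin_zero,
    neg_zero, zero_smul, zero_smul, sub_zero] at h
  exact sub_eq_zero.1 h

theorem integral_cos_smul_deriv_eq_zero [CompleteSpace F] (ha : ContDiff ℝ ∞ a) (m : ℕ)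
    (h : ∀ r ≠ 0, |r| < σ → ∫ θ in 0..2 * π, Real.cos ((m + 1 : ℕ) * θ) • a (r * Real.cos θ) = 0)
    {r : ℝ} (hr0 : r ≠ 0) (hr : |r| < σ) :
    ∫ θ in 0..2 * π, Real.cos (m * θ) • deriv a (r * Real.cos θ) = 0 := by
  have ha' : Continuous fun θ => deriv a (r * Real.cos θ) :=
    (ha.continuous_deriv (by simp)).comp (by fun_prop)
  have hcos : ∫ θ in 0..2 * π,
      (Real.cos ((m + 1 : ℕ) * θ) * Real.cos θ) • deriv a (r * Real.cos θ) = 0 := by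
    refine (hasDerivAt_integral_cos_smul ha (m + 1) r).unique
      ((hasDerivAt_const r (0 : F)).congr_of_eventuallyEq ?_)
    filter_upwards [isOpen_ne.mem_nhds hr0,
      (isOpen_lt continuous_abs continuous_const).mem_nhds hr] with t ht0 ht
    exact h t ht0 ht
  have hsin := smul_integral_cos_smul ha (m + 1) r
  rw [h r hr0 hr, smul_zero, eq_comm, smul_eq_zero_iff_right hr0] at hsin
  have hsplit (θ : ℝ) : Real.cos (m * θ) • deriv a (r * Real.cos θ)
      = (Real.cos ((m + 1 : ℕ) * θ) * Real.cos θ) • deriv a (r * Real.cos θ)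
        + (Real.sin ((m + 1 : ℕ) * θ) * Real.sin θ) • deriv a (r * Real.cos θ) := by
    rw [← add_smul, ← Real.cos_sub]
    congr 2
    push_cast
    ring
  simp only [hsplit]
  rw [intervalIntegral.integral_add, hcos, hsin, add_zero]
  · exact Continuous.intervalIntegrable (Continuous.smul (by fun_prop) ha') _ _
  · exact Continuous.intervalIntegrable (Continuous.smul (by fun_prop) ha') _ _

/-- Lowering `m` to `0` through `integral_cos_smul_deriv_eq_zero` reduces the vanishing of the
`m`-th Fourier mode of a backprojection to the Abel transform of an even function. -/
theorem iteratedDeriv_eq_zero_of_integral_cos_smul [CompleteSpace F] (m : ℕ)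
    (ha : ContDiff ℝ ∞ a) (hpar : ∀ s, a (-s) = (-1 : ℝ) ^ m • a s)
    (h : ∀ r ≠ 0, |r| < σ → ∫ θ in 0..2 * π, Real.cos (m * θ) • a (r * Real.cos θ) = 0)
    {s : ℝ} (hs : |s| < σ) : iteratedDeriv m a s = 0 := by
  induction m generalizing a with
  | zero =>
    rw [iteratedDeriv_zero]
    refine SeparatingDual.eq_zero_of_forall_dual_eq_zero (R := ℝ) fun L => ?_
    refine eq_zero_of_integral_comp_mul_cos (a := fun s => L (a s))
      (L.continuous.comp ha.continuous) (fun s => by simp [hpar]) (fun r hr0 hr => ?_) hs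
    have hr := congrArg L (h r hr0 hr)
    rw [← L.intervalIntegral_comp_comm] at hr
    · simpa using hr
    · exact Continuous.intervalIntegrable (Continuous.smul (by fun_prop)
        (ha.continuous.comp (by fun_prop))) _ _
  | succ m ih =>
    rw [iteratedDeriv_succ']
    refine ih (contDiff_infty_iff_deriv.1 ha).2 (fun s => ?_)
      fun r => integral_cos_smul_deriv_eq_zero ha m h
    have hd := deriv_comp_neg a s
    rw [funext hpar, deriv_fun_const_smul_field, pow_succ] at hd
    linear_combination (norm := module) (1 : ℝ) • hd

end CosineMoments

section ValleePoussin

/-- The de la Vallée Poussin kernel `((1 + cos t) / 2) ^ J`, normalised to have integral `1` over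
a period. -/
def valleePoussinKernel (J : ℕ) (t : ℝ) : ℝ :=
  (∫ s in Icc (-π) π, ((1 + Real.cos s) / 2) ^ J)⁻¹ * ((1 + Real.cos t) / 2) ^ J

theorem contDiff_valleePoussinKernel (J : ℕ) : ContDiff ℝ ∞ (valleePoussinKernel J) := by
  unfold valleePoussinKernel
  fun_prop

theorem valleePoussinKernel_add_two_pi (J : ℕ) (t : ℝ) :
    valleePoussinKernel J (t + 2 * π) = valleePoussinKernel J t := by
  simp [valleePoussinKernel]

theorem tendsto_integral_valleePoussinKernel_smul {F : Type*} [NormedAddCommGroup F]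
    [NormedSpace ℝ F] [CompleteSpace F] {g : ℝ → F} (hg : Continuous g) :
    Tendsto (fun J => ∫ t in -π..π, valleePoussinKernel J t • g t) atTop (𝓝 (g 0)) := by
  have h := tendsto_setIntegral_pow_smul_of_unique_maximum_of_isCompact_of_continuousOn
    (μ := volume) (s := Icc (-π) π) isCompact_Icc (c := fun t => (1 + Real.cos t) / 2) (x₀ := 0)
    (by fun_prop) (fun y hy hy0 => ?_) (fun y _ => ?_) (by norm_num) ?_ hg.continuousOn
  · simpa only [valleePoussinKernel, mul_smul, integral_smul,
      intervalIntegral.integral_of_le (neg_le_self Real.pi_pos.le),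
      ← integral_Icc_eq_integral_Ioc] using h
  · have hcos : Real.cos |y| < Real.cos 0 :=
      Real.cos_lt_cos_of_nonneg_of_le_pi le_rfl (abs_le.2 hy) (abs_pos.2 hy0)
    rw [Real.cos_abs] at hcos
    linarith
  · linarith [Real.neg_one_le_cos y]
  · rw [interior_Icc, closure_Ioo (by linarith [Real.pi_pos])]
    exact ⟨neg_nonpos.2 Real.pi_pos.le, Real.pi_pos.le⟩

/-- Uniformity in `x` comes from applying the pointwise statement to `t ↦ g (t, ·)` in `C(K, F)`. -/
theorem eventually_norm_integral_valleePoussinKernel_smul_sub_le {X F : Type*} [TopologicalSpace X]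
    [NormedAddCommGroup F] [NormedSpace ℝ F] [CompleteSpace F] {g : ℝ × X → F} (hg : Continuous g)
    {K : Set X} (hK : IsCompact K) {ε : ℝ} (hε : 0 < ε) :
    ∀ᶠ J in atTop, ∀ x ∈ K,
      ‖(∫ t in -π..π, valleePoussinKernel J t • g (t, x)) - g (0, x)‖ ≤ ε := by
  have : CompactSpace K := isCompact_iff_compactSpace.1 hK
  let G : C(ℝ, C(K, F)) := ContinuousMap.curry ⟨fun p => g (p.1, p.2), by fun_prop⟩
  have hcont (J : ℕ) : Continuous fun t => valleePoussinKernel J t • G t :=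
    (contDiff_valleePoussinKernel J).continuous.smul G.continuous
  filter_upwards [(tendsto_integral_valleePoussinKernel_smul G.continuous).eventually
    (closedBall_mem_nhds _ hε)] with J hJ x hx
  have heval := ContinuousLinearMap.intervalIntegral_comp_comm
    (μ := volume) (ContinuousMap.evalCLM ℝ (⟨x, hx⟩ : K)) ((hcont J).intervalIntegrable (-π) π)
  exact (congrArg (‖· - g (0, x)‖) heval).trans_le
    ((ContinuousMap.norm_coe_le_norm _ (⟨x, hx⟩ : K)).trans (mem_closedBall_iff_norm.1 hJ))

theorem pow_one_add_cos_mem_span (J : ℕ) : (fun t => ((1 + Real.cos t) / 2) ^ J) ∈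
    Submodule.span ℝ (range fun (m : ℕ) (t : ℝ) => Real.cos (m * t)) := by
  set S := Submodule.span ℝ (range fun (m : ℕ) (t : ℝ) => Real.cos (m * t))
  have hcos (m : ℕ) : (fun t => Real.cos (m * t)) ∈ S := Submodule.subset_span ⟨m, rfl⟩
  have hmul (κ : ℝ → ℝ) (hκ : κ ∈ S) : (fun t => κ t * Real.cos t) ∈ S := by
    induction hκ using Submodule.span_induction with
    | mem κ hκ =>
      obtain ⟨m, rfl⟩ := hκ
      rcases m with _ | m
      · simpa using hcos 1
      · convert S.smul_mem (1 / 2 : ℝ) (S.add_mem (hcos (m + 2)) (hcos m)) using 1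
        funext t
        have h := Real.cos_add_cos ((m + 2 : ℕ) * t) (m * t)
        simp only [Pi.smul_apply, Pi.add_apply, smul_eq_mul, h]
        push_cast
        ring_nf
    | zero =>
      simp only [Pi.zero_apply, zero_mul]
      exact S.zero_mem
    | add κ κ' _ _ h h' => simpa only [Pi.add_apply, add_mul] using! S.add_mem h h'
    | smul c κ _ h => simpa only [Pi.smul_apply, smul_mul_assoc] using! S.smul_mem c h
  induction J with
  | zero => simpa using hcos 0
  | succ J ih =>
    convert S.smul_mem (1 / 2 : ℝ) (S.add_mem ih (hmul _ ih)) using 1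
    funext t
    simp only [Pi.smul_apply, Pi.add_apply, smul_eq_mul]
    ring

end ValleePoussin

theorem intervalIntegral_swap_of_continuous {F : Type*} [NormedAddCommGroup F] [NormedSpace ℝ F]
    {f : ℝ → ℝ → F} (hf : Continuous (Function.uncurry f)) {a b c d : ℝ} :
    ∫ x in a..b, ∫ y in c..d, f x y = ∫ y in c..d, ∫ x in a..b, f x y :=
  intervalIntegral_intervalIntegral_swap <|
    (hf.continuousOn.integrableOn_compact (isCompact_uIcc.prod isCompact_uIcc)).mono_set
      (prod_mono uIoc_subset_uIcc uIoc_subset_uIcc)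

theorem iteratedDeriv_eq_zero_of_le {F : Type*} [NormedAddCommGroup F] [NormedSpace ℝ F]
    {a : ℝ → F} {U : Set ℝ} (hU : IsOpen U) {m n : ℕ} (h : ∀ s ∈ U, iteratedDeriv m a s = 0)
    (hmn : m ≤ n) : ∀ s ∈ U, iteratedDeriv n a s = 0 := by
  induction n, hmn using Nat.le_induction with
  | base => exact h
  | succ n _ ih =>
    intro s hs
    have hzero : iteratedDeriv n a =ᶠ[𝓝 s] fun _ => 0 := mem_of_superset (hU.mem_nhds hs) ih
    rw [iteratedDeriv_succ, hzero.deriv_eq, deriv_const]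

theorem eq_sum_of_iteratedDeriv_eq_zero {F : Type*} [NormedAddCommGroup F] [NormedSpace ℝ F]
    {a : ℝ → F} {σ : ℝ} {n : ℕ} (ha : ContDiff ℝ ∞ a)
    (h : ∀ s ∈ ball 0 σ, iteratedDeriv n a s = 0) {s : ℝ} (hs : s ∈ ball 0 σ) :
    a s = ∑ i ∈ Finset.range n, (s ^ i / i.factorial) • iteratedDeriv i a 0 := by
  induction n generalizing a s with
  | zero => simpa using h s hs
  | succ n ih =>
    have hderiv (t : ℝ) :
        HasDerivAt (fun t : ℝ => ∑ i ∈ Finset.range (n + 1),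
            (t ^ i / i.factorial) • iteratedDeriv i a 0)
          (∑ i ∈ Finset.range n, (t ^ i / i.factorial) • iteratedDeriv i (deriv a) 0) t := by
      refine (HasDerivAt.fun_sum fun i _ => ((hasDerivAt_pow i t).div_const _).smul_const
        (iteratedDeriv i a 0)).congr_deriv ?_
      rw [Finset.sum_range_succ']
      simp only [Nat.cast_zero, zero_mul, zero_div, zero_smul, add_zero]
      refine Finset.sum_congr rfl fun i _ => ?_
      rw [← iteratedDeriv_succ', Nat.factorial_succ, Nat.cast_mul, Nat.add_sub_cancel,
        mul_div_mul_left _ _ (Nat.cast_ne_zero.2 i.succ_ne_zero)]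
    refine isOpen_ball.eqOn_of_deriv_eq (convex_ball 0 σ).isPreconnected
      (ha.differentiable (by simp)).differentiableOn
      (fun t _ => (hderiv t).differentiableAt.differentiableWithinAt) (fun t ht => ?_)
      (mem_ball_self (dist_nonneg.trans_lt hs)) ?_ hs
    · rw [(hderiv t).deriv]
      exact ih (contDiff_infty_iff_deriv.1 ha).2 (by simpa only [iteratedDeriv_succ'] using h) ht
    · simp [Finset.sum_range_succ']

section AngularAverage

variable {E F G : Type*} [NormedAddCommGroup E] [NormedAddCommGroup F] [NormedSpace ℝ F]
  {κ κ' : ℝ → ℝ} {q : (ℝ × ℝ) × E → F}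

/-- The convolution of a family of functions on the space of lines with a kernel on the circle
of directions. -/
def angularAverage (κ : ℝ → ℝ) (q : (ℝ × ℝ) × E → F) : (ℝ × ℝ) × E → F :=
  fun x => ∫ t in 0..2 * π, κ t • q (x + ((t, 0), 0))

theorem angularAverage_apply (κ : ℝ → ℝ) (q : (ℝ × ℝ) × E → F) (θ s : ℝ) (w : E) :
    angularAverage κ q ((θ, s), w) = ∫ t in 0..2 * π, κ t • q ((θ + t, s), w) := by
  simp [angularAverage]

theorem angularAverage_eq_setIntegral (κ : ℝ → ℝ) (q : (ℝ × ℝ) × E → F) :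
    angularAverage κ q = fun x => ∫ t in Ioc 0 (2 * π), κ t • q (x + ((t, 0), 0)) := by
  unfold angularAverage
  simp only [intervalIntegral.integral_of_le Real.two_pi_pos.le]

theorem angularAverage_add (hκ : Continuous κ) (hκ' : Continuous κ') (hq : Continuous q)
    (x : (ℝ × ℝ) × E) :
    angularAverage (κ + κ') q x = angularAverage κ q x + angularAverage κ' q x := by
  simp only [angularAverage, Pi.add_apply, add_smul]
  exact intervalIntegral.integral_add (Continuous.intervalIntegrable (by fun_prop) _ _)
    (Continuous.intervalIntegrable (by fun_prop) _ _)

theorem angularAverage_smul (c : ℝ) (κ : ℝ → ℝ) (q : (ℝ × ℝ) × E → F) (x : (ℝ × ℝ) × E) :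
    angularAverage (c • κ) q x = c • angularAverage κ q x := by
  simp only [angularAverage, Pi.smul_apply, smul_assoc, intervalIntegral.integral_smul]

variable [NormedSpace ℝ E] [NormedAddCommGroup G] [NormedSpace ℝ G] {ℓ : (E →L[ℝ] F) →L[ℝ] G}

theorem dominated_angularAverage [FiniteDimensional ℝ E] (hκ : ContDiff ℝ ∞ κ)
    (hq : ContDiff ℝ ∞ q) :
    Dominated (volume.restrict (Ioc 0 (2 * π))) fun t x => κ t • q (x + ((t, 0), 0)) := by
  refine .of_Ioc ?_ _ _
  have h := hq.comp (by fun_prop :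
    ContDiff ℝ ∞ fun z : ℝ × (ℝ × ℝ) × E => z.2 + ((z.1, 0), 0))
  exact (hκ.comp contDiff_fst).smul h

theorem contDiff_angularAverage [FiniteDimensional ℝ E] (hκ : ContDiff ℝ ∞ κ)
    (hq : ContDiff ℝ ∞ q) : ContDiff ℝ ∞ (angularAverage κ q) := by
  rw [angularAverage_eq_setIntegral]
  exact (dominated_angularAverage hκ hq).contDiff

theorem solvesFibrewise_angularAverage [FiniteDimensional ℝ E] [CompleteSpace F]
    [CompleteSpace G] (hκ : ContDiff ℝ ∞ κ) (hq : ContDiff ℝ ∞ q) (hℓ : SolvesFibrewise ℓ q) :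
    SolvesFibrewise ℓ (angularAverage κ q) := by
  rw [angularAverage_eq_setIntegral]
  refine .integral (dominated_angularAverage hκ hq) fun t => ?_
  have h := (hℓ.comp_fst fun p => p + (t, 0)).smul_fst fun _ => κ t
  simpa only [Prod.add_def, add_zero] using h

theorem iteratedFDeriv_angularAverage [FiniteDimensional ℝ E] (hκ : ContDiff ℝ ∞ κ)
    (hq : ContDiff ℝ ∞ q) (n : ℕ) :
    iteratedFDeriv ℝ n (angularAverage κ q) = angularAverage κ (iteratedFDeriv ℝ n q) := by
  funext x
  rw [angularAverage_eq_setIntegral, angularAverage_eq_setIntegral,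
    ← (dominated_angularAverage hκ hq).hasFTaylorSeriesUpTo.eq_iteratedFDeriv (mod_cast le_top)]
  congr! 2 with _
  rw [iteratedFDeriv_const_smul_apply', iteratedFDeriv_comp_add_right]
  exact ((hq.of_le (mod_cast le_top)).comp (contDiff_id.add contDiff_const)).contDiffAt

theorem IsLineFunction.periodic (hq : IsLineFunction q) (θ s : ℝ) (w : E) :
    q ((θ + 2 * π, s), w) = q ((θ, s), w) := by
  rw [← hq.symm θ, ← hq.symm (θ + π), neg_neg, two_mul, add_assoc]

theorem IsLineFunction.dualRadon_rot (hq : IsLineFunction q) (φ r : ℝ) (w : E) :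
    dualRadon q (rot φ (r, 0)) w = ∫ t in 0..2 * π, q ((φ + t, r * Real.cos t), w) := by
  have hper : Function.Periodic (fun t => q ((t, r * Real.cos (t - φ)), w)) (2 * π) := fun t => by
    simp only [add_sub_right_comm, Real.cos_add_two_pi, hq.periodic]
  have hfst (θ : ℝ) : (rot (-θ) (rot φ (r, 0))).1 = r * Real.cos (θ - φ) := by
    rw [← rot_add, ← Real.cos_neg (θ - φ), neg_sub, sub_eq_neg_add]
    simp [rot_apply, mul_comm]
  simpa [dualRadon, hfst, add_comm φ] using (integral_comp_add_of_periodic hper φ).symm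

theorem IsLineFunction.angularAverage_cos_neg (hq : IsLineFunction q) (m : ℕ) (φ s : ℝ) (w : E) :
    angularAverage (fun t => Real.cos (m * t)) q ((φ, -s), w)
      = (-1 : ℝ) ^ m • angularAverage (fun t => Real.cos (m * t)) q ((φ, s), w) := by
  simp only [angularAverage_apply]
  have hper : Function.Periodic
      (fun t => Real.cos (m * t) • q ((φ + t, -s), w)) (2 * π) := fun t => by
    simp only [← add_assoc, hq.periodic, mul_add, Real.cos_add_nat_mul_two_pi]
  rw [← integral_comp_add_of_periodic hper π, ← intervalIntegral.integral_smul]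
  refine intervalIntegral.integral_congr fun t _ => ?_
  simp only [← add_assoc, hq.symm, mul_add, Real.cos_add_nat_mul_pi, smul_smul]

theorem IsLineFunction.angularAverage_add_angle (hq : IsLineFunction q)
    (hκ : Function.Periodic κ (2 * π)) (φ α s : ℝ) (w : E) :
    angularAverage κ q ((φ + α, s), w)
      = angularAverage (fun t => κ (t - α)) q ((φ, s), w) := by
  have hper : Function.Periodic (fun t => κ (t - α) • q ((φ + t, s), w)) (2 * π) := fun t => by
    simp only [← add_assoc, hq.periodic, add_sub_right_comm, hκ _]
  simpa [angularAverage_apply, add_assoc, add_comm α] using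
    integral_comp_add_of_periodic hper α

theorem IsLineFunction.integral_smul_dualRadon_rot (hq : IsLineFunction q) (hκ : Continuous κ)
    (φ r : ℝ) (w : E) :
    ∫ β in 0..2 * π, κ β • dualRadon q (rot (φ + β) (r, 0)) w
      = ∫ α in 0..2 * π, angularAverage κ q ((φ + α, r * Real.cos α), w) := by
  have hcont := hq.smooth.continuous
  simp only [angularAverage_apply, hq.dualRadon_rot, ← intervalIntegral.integral_smul]
  rw [intervalIntegral_swap_of_continuous (by fun_prop)]
  simp only [add_right_comm φ]

/-- Average over `α` and `-α`: the offset `r cos α` is even in `α`. -/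
theorem IsLineFunction.integral_cos_smul_angularAverage_cos (hq : IsLineFunction q) (m : ℕ)
    (φ r : ℝ) (w : E) :
    ∫ α in 0..2 * π, Real.cos (m * α) •
      angularAverage (fun t => Real.cos (m * t)) q ((φ, r * Real.cos α), w)
      = ∫ α in 0..2 * π,
        angularAverage (fun t => Real.cos (m * t)) q ((φ + α, r * Real.cos α), w) := by
  have hcont := hq.smooth.continuous
  set H : ℝ → F := fun α =>
    angularAverage (fun t => Real.cos (m * t)) q ((φ + α, r * Real.cos α), w)
  have hper : Function.Periodic H (2 * π) := fun α => by
    simp only [H, angularAverage_apply, ← add_assoc, add_right_comm _ (2 * π), hq.periodic,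
      Real.cos_add_two_pi]
  have hH : Continuous H := by
    simp only [H, angularAverage_apply]
    exact intervalIntegral.continuous_parametric_intervalIntegral_of_continuous'
      (f := fun α t => Real.cos (m * t) • q ((φ + α + t, r * Real.cos α), w)) (by fun_prop) _ _
  have hadd (α : ℝ) : H α + H (-α) = (2 : ℝ) • (Real.cos (m * α) •
      angularAverage (fun t => Real.cos (m * t)) q ((φ, r * Real.cos α), w)) := by
    have hκ : Function.Periodic (fun t => Real.cos (m * t)) (2 * π) := fun t => by
      simp only [mul_add, Real.cos_add_nat_mul_two_pi]
    simp only [H, hq.angularAverage_add_angle hκ, Real.cos_neg, angularAverage_apply]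
    rw [← intervalIntegral.integral_add
      (Continuous.intervalIntegrable (by fun_prop) _ _)
      (Continuous.intervalIntegrable (by fun_prop) _ _), ← intervalIntegral.integral_smul,
      ← intervalIntegral.integral_smul]
    refine intervalIntegral.integral_congr fun t _ => ?_
    simp only [← add_smul, smul_smul, sub_neg_eq_add, mul_sub, mul_add, Real.cos_add, Real.cos_sub]
    ring_nf
  refine smul_right_injective F (two_ne_zero (α := ℝ)) ?_
  simp only [← intervalIntegral.integral_smul (2 : ℝ), ← hadd]
  rw [intervalIntegral.integral_add (hH.intervalIntegrable _ _)
    (Continuous.intervalIntegrable (by fun_prop) _ _), integral_comp_neg_of_periodic hper,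
    intervalIntegral.integral_smul, two_smul]

theorem IsLineFunction.iteratedDeriv_angularAverage_cos_eq_zero [FiniteDimensional ℝ E]
    [CompleteSpace F] (hq : IsLineFunction q) {w : E} {σ : ℝ}
    (h : ∀ v, ‖v‖ < σ → dualRadon q v w = 0) (m : ℕ) (φ : ℝ) {s : ℝ} (hs : |s| < σ) :
    iteratedDeriv m
      (fun s => angularAverage (fun t => Real.cos (m * t)) q ((φ, s), w)) s = 0 := by
  have hA := (contDiff_angularAverage (by fun_prop : ContDiff ℝ ∞ fun t => Real.cos (m * t))
    hq.smooth).comp (by fun_prop : ContDiff ℝ ∞ fun s : ℝ => ((φ, s), w))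
  refine iteratedDeriv_eq_zero_of_integral_cos_smul m hA
    (fun s => hq.angularAverage_cos_neg m φ s w) (fun r _ hr => ?_) hs
  have hzero (θ : ℝ) : dualRadon q (rot θ (r, 0)) w = 0 := by
    refine h _ (lt_of_le_of_lt ?_ hr)
    simpa [rot_apply, Prod.norm_def, abs_mul] using
      And.intro (mul_le_of_le_one_left (abs_nonneg r) (Real.abs_cos_le_one θ))
        (mul_le_of_le_one_left (abs_nonneg r) (Real.abs_sin_le_one θ))
  exact (hq.integral_cos_smul_angularAverage_cos m φ r w).trans
    ((hq.integral_smul_dualRadon_rot (by fun_prop) φ r w).symm.trans (by simp [hzero]))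

theorem iteratedDeriv_angularAverage_eq_zero_of_mem_span [FiniteDimensional ℝ E]
    [CompleteSpace F] (hq : IsLineFunction q) {σ : ℝ}
    (h : ∀ v w, ‖v‖ < σ → dualRadon q v w = 0)
    (hκ : κ ∈ Submodule.span ℝ (range fun (m : ℕ) (t : ℝ) => Real.cos (m * t))) :
    ContDiff ℝ ∞ κ ∧ ∀ᶠ n in atTop, ∀ φ w, ∀ s ∈ ball (0 : ℝ) σ,
      iteratedDeriv n (fun s => angularAverage κ q ((φ, s), w)) s = 0 := by
  have hoffset {κ : ℝ → ℝ} (hκ : ContDiff ℝ ∞ κ) (φ : ℝ) (w : E) (n : ℕ) :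
      ContDiff ℝ n fun s => angularAverage κ q ((φ, s), w) :=
    ((contDiff_angularAverage hκ hq.smooth).of_le (mod_cast le_top)).comp (by fun_prop)
  induction hκ using Submodule.span_induction with
  | mem κ hκ =>
    obtain ⟨m, rfl⟩ := hκ
    refine ⟨by fun_prop, ?_⟩
    filter_upwards [eventually_ge_atTop m] with n hn φ w
    exact iteratedDeriv_eq_zero_of_le isOpen_ball (fun s hs =>
      hq.iteratedDeriv_angularAverage_cos_eq_zero (h · w) m φ (mem_ball_zero_iff.1 hs)) hn
  | zero => exact ⟨contDiff_const, .of_forall fun n φ w s _ => by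
      simp [angularAverage_apply]⟩
  | add κ κ' _ _ hκ hκ' =>
    refine ⟨hκ.1.add hκ'.1, ?_⟩
    filter_upwards [hκ.2, hκ'.2] with n hn hn' φ w s hs
    simp only [angularAverage_add hκ.1.continuous hκ'.1.continuous hq.smooth.continuous]
    rw [iteratedDeriv_fun_add (hoffset hκ.1 φ w n).contDiffAt
      (hoffset hκ'.1 φ w n).contDiffAt, hn φ w s hs, hn' φ w s hs, add_zero]
  | smul c κ _ hκ =>
    refine ⟨hκ.1.const_smul c, hκ.2.mono fun n hn φ w s hs => ?_⟩
    simp only [angularAverage_smul]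
    rw [iteratedDeriv_fun_const_smul_field, hn φ w s hs, smul_zero]

end AngularAverage

section OffsetTaylor

variable {E F G : Type*} [NormedAddCommGroup E] [NormedSpace ℝ E] [NormedAddCommGroup F]
  [NormedSpace ℝ F] [NormedAddCommGroup G] [NormedSpace ℝ G] {ℓ : (E →L[ℝ] F) →L[ℝ] G}
  {κ : ℝ → ℝ} {q : (ℝ × ℝ) × E → F}

/-- The Taylor polynomial of degree `< n` at `s = 0` in the offset `s` of a family of functions
on the space of lines. -/
def offsetTaylor (n : ℕ) (q : (ℝ × ℝ) × E → F) : (ℝ × ℝ) × E → F :=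
  fun x => ∑ i ∈ Finset.range n, (x.1.2 ^ i / i.factorial) • offsetDeriv^[i] q ((x.1.1, 0), x.2)

theorem contDiff_offsetTaylor_term (hq : ContDiff ℝ ∞ q) (i : ℕ) :
    ContDiff ℝ ∞ fun x : (ℝ × ℝ) × E =>
      (x.1.2 ^ i / i.factorial) • offsetDeriv^[i] q ((x.1.1, 0), x.2) := by
  have h := (contDiff_iterate_offsetDeriv hq i).comp
    (by fun_prop : ContDiff ℝ ∞ fun x : (ℝ × ℝ) × E => ((x.1.1, (0 : ℝ)), x.2))
  fun_prop

theorem contDiff_offsetTaylor (hq : ContDiff ℝ ∞ q) (n : ℕ) : ContDiff ℝ ∞ (offsetTaylor n q) :=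
  ContDiff.sum fun i _ => contDiff_offsetTaylor_term hq i

theorem solvesFibrewise_offsetTaylor (hq : ContDiff ℝ ∞ q) (hℓ : SolvesFibrewise ℓ q) (n : ℕ) :
    SolvesFibrewise ℓ (offsetTaylor n q) :=
  .fun_sum (fun i _ => ((hℓ.iterate_offsetDeriv hq i).comp_fst
      fun p : ℝ × ℝ => (p.1, (0 : ℝ))).smul_fst fun p : ℝ × ℝ => p.2 ^ i / i.factorial)
    fun i _ => (contDiff_offsetTaylor_term hq i).differentiable (by simp)

theorem offsetTaylor_eq (hq : ContDiff ℝ ∞ q) {n : ℕ} {σ θ : ℝ} {w : E}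
    (h : ∀ s ∈ ball 0 σ, iteratedDeriv n (fun s => q ((θ, s), w)) s = 0) {s : ℝ}
    (hs : s ∈ ball 0 σ) : offsetTaylor n q ((θ, s), w) = q ((θ, s), w) := by
  have h := eq_sum_of_iteratedDeriv_eq_zero
    (hq.comp (by fun_prop : ContDiff ℝ ∞ fun s : ℝ => ((θ, s), w))) h hs
  simp only [Function.comp_def, iteratedDeriv_offset hq] at h
  exact h.symm

theorem continuous_rot_neg_fst (v : ℝ × ℝ) : Continuous fun θ => (rot (-θ) v).1 := by
  simp only [rot_apply]
  fun_prop

theorem dualRadon_offsetTaylor_smul (hq : ContDiff ℝ ∞ q) (n : ℕ) (τ : ℝ) (v : ℝ × ℝ) (w : E) :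
    dualRadon (offsetTaylor n q) (τ • v) w = ∑ i ∈ Finset.range n, τ ^ i •
      ∫ θ in 0..2 * π, ((rot (-θ) v).1 ^ i / i.factorial) • offsetDeriv^[i] q ((θ, 0), w) := by
  have hrot := continuous_rot_neg_fst v
  simp only [dualRadon, offsetTaylor, map_smul, Prod.smul_fst, smul_eq_mul, mul_pow,
    mul_div_assoc, mul_smul]
  rw [intervalIntegral.integral_finsetSum]
  · simp only [intervalIntegral.integral_smul]
  · intro i _
    have hc := (contDiff_iterate_offsetDeriv hq i).continuous
    exact Continuous.intervalIntegrable (by fun_prop) _ _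

theorem sum_pow_smul_eq_zero_of_eventually {n : ℕ} {b : ℕ → F}
    (h : ∀ᶠ τ : ℝ in 𝓝 0, ∑ i ∈ Finset.range n, τ ^ i • b i = 0) (τ : ℝ) :
    ∑ i ∈ Finset.range n, τ ^ i • b i = 0 := by
  have hana : AnalyticOnNhd ℝ (fun τ : ℝ => ∑ i ∈ Finset.range n, τ ^ i • b i) univ :=
    Finset.analyticOnNhd_fun_sum _ fun i _ =>
      (analyticOnNhd_id.pow i).smul analyticOnNhd_const
  exact congrFun (hana.eq_of_eventuallyEq analyticOnNhd_const h) τ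

theorem dualRadon_offsetTaylor_eq_zero (hq : ContDiff ℝ ∞ q) {n : ℕ} {w : E}
    (h : ∀ᶠ v in 𝓝 0, dualRadon (offsetTaylor n q) v w = 0) (v : ℝ × ℝ) :
    dualRadon (offsetTaylor n q) v w = 0 := by
  have hray : Tendsto (fun τ : ℝ => τ • v) (𝓝 0) (𝓝 0) :=
    Continuous.tendsto' (by fun_prop) 0 0 (zero_smul ℝ v)
  have hnear := hray.eventually h
  simp only [dualRadon_offsetTaylor_smul hq] at hnear
  rw [← one_smul ℝ v, dualRadon_offsetTaylor_smul hq, sum_pow_smul_eq_zero_of_eventually hnear]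

theorem IsLineFunction.dualRadon_angularAverage (hq : IsLineFunction q) (hκ : Continuous κ)
    (v : ℝ × ℝ) (w : E) :
    dualRadon (angularAverage κ q) v w
      = ∫ t in 0..2 * π, κ t • dualRadon q (rot t v) w := by
  have hcont := hq.smooth.continuous
  have hrot := (continuous_rot_neg_fst v).comp (continuous_fst (Y := ℝ))
  have hshift (t : ℝ) : dualRadon q (rot t v) w
      = ∫ θ in 0..2 * π, q ((θ + t, (rot (-θ) v).1), w) := by
    have hper : Function.Periodic (fun θ => q ((θ, (rot (-θ) (rot t v)).1), w)) (2 * π) := by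
      intro θ
      simp only [rot_apply, Real.cos_neg, Real.sin_neg, Real.cos_add_two_pi, Real.sin_add_two_pi,
        hq.periodic]
    rw [dualRadon, ← integral_comp_add_of_periodic hper t]
    simp only [← rot_add, neg_add_rev, add_right_comm, neg_add_cancel, zero_add]
  simp only [hshift]
  simp only [dualRadon, angularAverage_apply, ← intervalIntegral.integral_smul]
  exact intervalIntegral_swap_of_continuous
    (f := fun θ t => κ t • q ((θ + t, (rot (-θ) v).1), w))
    ((hκ.comp continuous_snd).smul (hcont.comp
      (((continuous_fst.add continuous_snd).prodMk hrot).prodMk continuous_const)))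

/-- On `|s| < σ` the average coincides with its Taylor polynomial in the offset `s`, whose dual
Radon transform is a polynomial in `v` vanishing near `0`. -/
theorem exists_dualRadon_eq_zero_and_eq_angularAverage [FiniteDimensional ℝ E]
    [CompleteSpace F] [CompleteSpace G] (hq : IsLineFunction q) (hℓ : SolvesFibrewise ℓ q) {σ : ℝ}
    (hσ : 0 < σ) (h : ∀ v w, ‖v‖ < σ → dualRadon q v w = 0)
    (hκ : κ ∈ Submodule.span ℝ (range fun (m : ℕ) (t : ℝ) => Real.cos (m * t))) :
    ∃ k : (ℝ × ℝ) × E → F, ContDiff ℝ ∞ k ∧ SolvesFibrewise ℓ k ∧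
      (∀ v w, dualRadon k v w = 0) ∧ ∀ x, ‖x‖ < σ → k x = angularAverage κ q x := by
  obtain ⟨hκs, hn⟩ := iteratedDeriv_angularAverage_eq_zero_of_mem_span hq h hκ
  obtain ⟨n, hn⟩ := hn.exists
  have hA := contDiff_angularAverage hκs hq.smooth
  have hnear (w : E) :
      ∀ᶠ v in 𝓝 0, dualRadon (offsetTaylor n (angularAverage κ q)) v w = 0 := by
    filter_upwards [ball_mem_nhds (0 : ℝ × ℝ) (half_pos hσ)] with v hv
    have hrot (θ : ℝ) : ‖rot θ v‖ < σ :=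
      (norm_rot_le θ v).trans_lt (by linarith [mem_ball_zero_iff.1 hv])
    calc dualRadon (offsetTaylor n (angularAverage κ q)) v w
        = dualRadon (angularAverage κ q) v w :=
          intervalIntegral.integral_congr fun θ _ => offsetTaylor_eq hA (hn θ w)
            (mem_ball_zero_iff.2 ((norm_fst_le _).trans_lt (hrot (-θ))))
      _ = 0 := by simp [hq.dualRadon_angularAverage hκs.continuous, h _ w (hrot _)]
  refine ⟨_, contDiff_offsetTaylor hA n, solvesFibrewise_offsetTaylor hA
    (solvesFibrewise_angularAverage hκs hq.smooth hℓ) n,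
    fun v w => dualRadon_offsetTaylor_eq_zero hA (hnear w) v, fun x hx => ?_⟩
  exact offsetTaylor_eq hA (hn x.1.1 x.2) (mem_ball_zero_iff.2
    (((norm_snd_le x.1).trans (norm_fst_le x)).trans_lt hx))

theorem valleePoussinKernel_mem_span (J : ℕ) : valleePoussinKernel J ∈
    Submodule.span ℝ (range fun (m : ℕ) (t : ℝ) => Real.cos (m * t)) :=
  Submodule.smul_mem _ _ (pow_one_add_cos_mem_span J)

theorem IsLineFunction.iteratedFDeriv_periodic (hq : IsLineFunction q) (n : ℕ)
    (x : (ℝ × ℝ) × E) : iteratedFDeriv ℝ n q (x + ((2 * π, 0), 0)) = iteratedFDeriv ℝ n q x := by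
  rw [← iteratedFDeriv_comp_add_right]
  congr 1
  funext x
  simpa only [Prod.add_def, add_zero] using hq.periodic x.1.1 x.1.2 x.2

theorem IsLineFunction.eventually_norm_iteratedFDeriv_angularAverage_sub_le
    [FiniteDimensional ℝ E] [CompleteSpace F] (hq : IsLineFunction q) (n : ℕ)
    {K : Set ((ℝ × ℝ) × E)} (hK : IsCompact K) {ε : ℝ} (hε : 0 < ε) :
    ∀ᶠ J in atTop, ∀ x ∈ K, ‖iteratedFDeriv ℝ n (angularAverage (valleePoussinKernel J) q) x
      - iteratedFDeriv ℝ n q x‖ ≤ ε := by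
  have hcont : Continuous fun p : ℝ × (ℝ × ℝ) × E =>
      iteratedFDeriv ℝ n q (p.2 + ((p.1, 0), 0)) :=
    (hq.smooth.continuous_iteratedFDeriv (mod_cast le_top)).comp (by fun_prop)
  filter_upwards [eventually_norm_integral_valleePoussinKernel_smul_sub_le hcont hK hε]
    with J hJ x hx
  have hper : Function.Periodic (fun t => valleePoussinKernel J t •
      iteratedFDeriv ℝ n q (x + ((t, 0), 0))) (2 * π) := fun t => by
    have hsplit : x + ((t + 2 * π, 0), 0) = x + ((t, 0), 0) + ((2 * π, 0), 0) := by
      simp [add_assoc]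
    simp only [valleePoussinKernel_add_two_pi, hsplit, hq.iteratedFDeriv_periodic]
  have hshift := hper.intervalIntegral_add_eq 0 (-π)
  rw [zero_add, show -π + 2 * π = π by ring] at hshift
  rw [iteratedFDeriv_angularAverage (contDiff_valleePoussinKernel J) hq.smooth, angularAverage,
    hshift]
  simpa only [Prod.mk_zero_zero, add_zero] using hJ x hx

/-- The approximation step of a Runge type argument. -/
theorem exists_dualRadon_eq_zero_and_norm_sub_le [FiniteDimensional ℝ E] [CompleteSpace F]
    [CompleteSpace G] (hq : IsLineFunction q) (hℓ : SolvesFibrewise ℓ q) {σ : ℝ}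
    (h : ∀ v w, ‖v‖ < σ → dualRadon q v w = 0) (N : ℕ) {ε : ℝ} (hε : 0 < ε) :
    ∃ k : (ℝ × ℝ) × E → F, ContDiff ℝ ∞ k ∧ SolvesFibrewise ℓ k ∧
      (∀ v w, dualRadon k v w = 0) ∧ ∀ n ≤ N, ∀ x, ‖x‖ < σ →
        ‖iteratedFDeriv ℝ n (fun x => q x - k x) x‖ ≤ ε := by
  rcases le_or_gt σ 0 with hσ | hσ
  · exact ⟨fun _ => 0, contDiff_const, fun p w => by simp, fun v w => by simp [dualRadon],
      fun n _ x hx => absurd ((norm_nonneg x).trans_lt hx) hσ.not_gt⟩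
  have hJ : ∀ᶠ J in atTop, ∀ n ∈ Finset.range (N + 1), ∀ x ∈ closedBall 0 σ,
      ‖iteratedFDeriv ℝ n (angularAverage (valleePoussinKernel J) q) x
        - iteratedFDeriv ℝ n q x‖ ≤ ε :=
    (Finset.eventually_all _).2 fun n _ =>
      hq.eventually_norm_iteratedFDeriv_angularAverage_sub_le n (isCompact_closedBall 0 σ) hε
  obtain ⟨J, hJ⟩ := hJ.exists
  obtain ⟨k, hk, hkℓ, hk0, hkq⟩ := exists_dualRadon_eq_zero_and_eq_angularAverage hq hℓ hσ h
    (valleePoussinKernel_mem_span J)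
  refine ⟨k, hk, hkℓ, hk0, fun n hn x hx => ?_⟩
  have heq : k =ᶠ[𝓝 x] angularAverage (valleePoussinKernel J) q := by
    filter_upwards [isOpen_ball.mem_nhds (mem_ball_zero_iff.2 hx)] with y hy
    exact hkq y (mem_ball_zero_iff.1 hy)
  rw [fun_iteratedFDeriv_sub_apply (hq.smooth.of_le (mod_cast le_top)).contDiffAt
    (hk.of_le (mod_cast le_top)).contDiffAt, (heq.iteratedFDeriv ℝ n).eq_of_nhds, norm_sub_rev]
  exact hJ n (Finset.mem_range_succ_iff.2 hn) x (mem_closedBall_zero_iff.2 hx.le)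

end OffsetTaylor

section Surjectivity

theorem exists_annular_partition (V : Type*) [NormedAddCommGroup V] [NormedSpace ℝ V]
    [FiniteDimensional ℝ V] : ∃ a : ℕ → V → ℝ, (∀ m, ContDiff ℝ ∞ (a m)) ∧
      (∀ (m : ℕ) v, ‖v‖ < m - 1 → a m v = 0) ∧ (∀ (m : ℕ) v, m + 1 < ‖v‖ → a m v = 0) ∧
      ∀ v, HasSum (fun m => a m v) 1 := by
  obtain ⟨a, ha⟩ := SmoothPartitionOfUnity.exists_isSubordinate (modelWithCornersSelf ℝ V)
    isClosed_univ (fun m : ℕ => {v : V | m - 1 < ‖v‖ ∧ ‖v‖ < m + 1})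
    (fun m => (isOpen_lt continuous_const continuous_norm).inter
      (isOpen_lt continuous_norm continuous_const))
    fun v _ => mem_iUnion.2 ⟨⌊‖v‖⌋₊, by
      linarith [Nat.floor_le (norm_nonneg v)], Nat.lt_floor_add_one ‖v‖⟩
  have hsupp (m : ℕ) (v : V) (hv : a m v ≠ 0) := ha m (subset_tsupport _ hv)
  refine ⟨fun m => a m, fun m => (a m).contMDiff.contDiff, fun m v hv => ?_, fun m v hv => ?_,
    fun v => ?_⟩
  · exact of_not_not fun h => hv.not_gt (hsupp m v h).1
  · exact of_not_not fun h => hv.not_gt (hsupp m v h).2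
  · have hfin : (Function.support fun m => a m v).Finite := a.locallyFinite.point_finite v
    have h : HasSum (fun m => a m v) (∑' m, a m v) := (summable_of_hasFiniteSupport hfin).hasSum
    rwa [tsum_eq_finsum hfin, a.sum_eq_one (mem_univ v)] at h

variable {E F G : Type*} [NormedAddCommGroup E] [NormedAddCommGroup F] [NormedSpace ℝ F]

theorem dualRadon_sub {q k : (ℝ × ℝ) × E → F} (hq : Continuous q) (hk : Continuous k) (v : ℝ × ℝ)
    (w : E) : dualRadon (fun x => q x - k x) v w = dualRadon q v w - dualRadon k v w := by
  have hrot := continuous_rot_neg_fst v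
  exact intervalIntegral.integral_sub (Continuous.intervalIntegrable (by fun_prop) _ _)
    (Continuous.intervalIntegrable (by fun_prop) _ _)

variable [NormedSpace ℝ E] [CompleteSpace F]

theorem dualRadon_integral_count {q : ℕ → (ℝ × ℝ) × E → F} (hq : Dominated Measure.count q)
    {v : ℝ × ℝ} {w : E} {y : F} (h : HasSum (fun m => dualRadon (q m) v w) y) :
    dualRadon (fun x => ∫ m, q m x ∂Measure.count) v w = y := by
  have hrot := continuous_rot_neg_fst v
  obtain ⟨R, hR⟩ := (isCompact_Icc (a := 0) (b := 2 * π)).exists_bound_of_continuousOn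
    (f := fun θ => ((θ, (rot (-θ) v).1), w)) (by fun_prop)
  obtain ⟨B, hB, hle⟩ := hq.bound 0 (R + 1)
  rw [integrable_count_iff] at hB
  have hle (m : ℕ) := Measure.ae_count_iff.1 hle m
  have hsum (θ : ℝ) : HasSum (fun m => q m ((θ, (rot (-θ) v).1), w))
      (∫ m, q m ((θ, (rot (-θ) v).1), w) ∂Measure.count) := by
    have hint := hq.integrable ((θ, (rot (-θ) v).1), w)
    rw [integral_countable hint]
    simpa using (integrable_count_iff.1 hint).of_norm.hasSum
  refine (intervalIntegral.hasSum_integral_of_dominated_convergence (fun m _ => ‖B m‖)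
    (fun m => ?_) (fun m => .of_forall fun θ hθ => ?_) (.of_forall fun _ _ => hB)
    (Continuous.intervalIntegrable (by fun_prop) _ _)
    (.of_forall fun θ _ => hsum θ)).unique h
  · have hqm := (hq.smooth m).continuous
    exact Continuous.aestronglyMeasurable (by fun_prop)
  · rw [uIoc_of_le Real.two_pi_pos.le] at hθ
    simpa using (hle m _ ((hR θ (Ioc_subset_Icc_self hθ)).trans_lt (lt_add_one R))).trans
      (le_abs_self _)

variable [FiniteDimensional ℝ E] [NormedAddCommGroup G] [NormedSpace ℝ G] [CompleteSpace G]
  {ℓ : (E →L[ℝ] F) →L[ℝ] G} {f : (ℝ × ℝ) × E → F}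

theorem exists_dualRadon_eq_and_norm_le (hf : ContDiff ℝ ∞ f) {M : ℝ}
    (hfM : ∀ v w, M < ‖v‖ → f (v, w) = 0) (hℓ : SolvesFibrewise ℓ f) {σ : ℝ}
    (hfσ : ∀ v w, ‖v‖ < σ → f (v, w) = 0) (N : ℕ) {ε : ℝ} (hε : 0 < ε) :
    ∃ q : (ℝ × ℝ) × E → F, ContDiff ℝ ∞ q ∧ SolvesFibrewise ℓ q ∧
      (∀ v w, dualRadon q v w = f (v, w)) ∧
      ∀ n ≤ N, ∀ x, ‖x‖ < σ → ‖iteratedFDeriv ℝ n q x‖ ≤ ε := by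
  have hq := isLineFunction_radonInverse hf hfM
  have hqℓ := solvesFibrewise_radonInverse hf hfM hℓ
  obtain ⟨k, hk, hkℓ, hk0, hqk⟩ := exists_dualRadon_eq_zero_and_norm_sub_le hq hqℓ
    (fun v w hv => (dualRadon_radonInverse hf hfM v w).trans (hfσ v w hv)) N hε
  refine ⟨_, hq.smooth.sub hk, hqℓ.fun_sub hkℓ (hq.smooth.differentiable (by simp))
    (hk.differentiable (by simp)), fun v w => ?_, hqk⟩
  rw [dualRadon_sub hq.smooth.continuous hk.continuous, dualRadon_radonInverse hf hfM, hk0,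
    sub_zero]

/-- Cut `f` into annuli; the inverse transforms of the far pieces are small near the origin after
a correction in the kernel, so their sum converges. -/
theorem exists_dualRadon_eq (hf : ContDiff ℝ ∞ f) (hℓ : SolvesFibrewise ℓ f) :
    ∃ q : (ℝ × ℝ) × E → F, ContDiff ℝ ∞ q ∧ SolvesFibrewise ℓ q ∧
      ∀ v w, dualRadon q v w = f (v, w) := by
  obtain ⟨a, ha, ha_near, ha_far, ha_sum⟩ := exists_annular_partition (ℝ × ℝ)
  have hpiece (m : ℕ) := exists_dualRadon_eq_and_norm_le (f := fun x => a m x.1 • f x)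
    (M := m + 1) (σ := m - 1) (((ha m).comp contDiff_fst).smul hf)
    (fun v w hv => by simp [ha_far m v hv])
    (hℓ.smul_fst (a m)) (fun v w hv => by simp [ha_near m v hv]) m
    (show (0 : ℝ) < (1 / 2) ^ m by positivity)
  choose q hq hqℓ hqf hq_le using hpiece
  have hdom : Dominated Measure.count q := .count hq fun n R => by
    obtain ⟨N, hN⟩ := exists_nat_ge (R + 1)
    filter_upwards [eventually_ge_atTop n, eventually_ge_atTop N] with m hmn hmN x hx
    have hmN : (N : ℝ) ≤ m := mod_cast hmN
    exact hq_le m n hmn x (by linarith)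
  refine ⟨_, hdom.contDiff, .integral hdom hqℓ, fun v w => dualRadon_integral_count hdom ?_⟩
  simpa [hqf] using (ha_sum v).smul_const (f (v, w))

end Surjectivity

theorem exists_offsetDeriv_eq {P E F G : Type*} [NormedAddCommGroup P] [NormedSpace ℝ P]
    [FiniteDimensional ℝ P] [NormedAddCommGroup E] [NormedSpace ℝ E] [FiniteDimensional ℝ E]
    [NormedAddCommGroup F] [NormedSpace ℝ F] [CompleteSpace F] [NormedAddCommGroup G]
    [NormedSpace ℝ G] [CompleteSpace G] {ℓ : (E →L[ℝ] F) →L[ℝ] G} {q : (P × ℝ) × E → F}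
    (hq : ContDiff ℝ ∞ q) (hℓ : SolvesFibrewise ℓ q) :
    ∃ Q : (P × ℝ) × E → F, ContDiff ℝ ∞ Q ∧ SolvesFibrewise ℓ Q ∧ offsetDeriv Q = q := by
  have hscaled : ContDiff ℝ ∞
      (Function.uncurry fun (τ : ℝ) (x : (P × ℝ) × E) => q ((x.1.1, τ * x.1.2), x.2)) :=
    hq.comp (by fun_prop :
      ContDiff ℝ ∞ fun y : ℝ × (P × ℝ) × E => ((y.2.1.1, y.1 * y.2.1.2), y.2.2))
  have hprim (p : P) (s : ℝ) (w : E) : s • ∫ τ in (0 : ℝ)..1, q ((p, τ * s), w)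
      = ∫ σ in (0 : ℝ)..s, q ((p, σ), w) := by
    simpa using intervalIntegral.smul_integral_comp_mul_right (fun σ => q ((p, σ), w)) s
      (a := 0) (b := 1)
  let Q (x : (P × ℝ) × E) : F := x.1.2 • ∫ τ in (0 : ℝ)..1, q ((x.1.1, τ * x.1.2), x.2)
  have hQ : ContDiff ℝ ∞ Q :=
    (by fun_prop : ContDiff ℝ ∞ fun x : (P × ℝ) × E => x.1.2).smul
      (contDiff_intervalIntegral hscaled zero_le_one)
  refine ⟨Q, hQ, ?_, funext fun ⟨⟨p, s⟩, w⟩ => ?_⟩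
  · simp only [Q, intervalIntegral.integral_of_le zero_le_one]
    exact (SolvesFibrewise.integral (.of_Ioc hscaled 0 1) fun τ =>
      hℓ.comp_fst fun x : P × ℝ => (x.1, τ * x.2)).smul_fst Prod.snd
  · refine (hasDerivAt_offset (hQ.differentiable (by simp)) p s w).unique ?_
    simp only [Q, hprim]
    have hcont := hq.continuous
    exact intervalIntegral.integral_hasDerivAt_right
      (Continuous.intervalIntegrable (by fun_prop) _ _)
      (Continuous.stronglyMeasurableAtFilter (by fun_prop) _ _)
      (Continuous.continuousAt (by fun_prop))

section DirectionalDerivatives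

variable {E : Type*} [NormedAddCommGroup E] [NormedSpace ℝ E] {f g : E → ℝ}

theorem contDiff_pdv (hf : ContDiff ℝ ∞ f) (v : E) : ContDiff ℝ ∞ (pdv v f) :=
  (hf.fderiv_right (by simp)).clm_apply contDiff_const

theorem pdv_pdv (hf : ContDiff ℝ ∞ f) (u v z : E) :
    pdv u (pdv v f) z = fderiv ℝ (fderiv ℝ f) z u v := by
  have hd : Differentiable ℝ (fderiv ℝ f) :=
    (hf.fderiv_right (m := ∞) (by simp)).differentiable (by simp)
  change fderiv ℝ (fun z => fderiv ℝ f z v) z u = _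
  rw [fderiv_clm_apply (hd z) (differentiableAt_const v)]
  simp

theorem pdv_comm (hf : ContDiff ℝ ∞ f) (u v : E) : pdv u (pdv v f) = pdv v (pdv u f) := by
  funext z
  rw [pdv_pdv hf, pdv_pdv hf]
  exact hf.contDiffAt.isSymmSndFDerivAt (by
    rw [minSmoothness_of_isRCLikeNormedField]
    exact WithTop.coe_le_coe.2 (le_top : (2 : ℕ∞) ≤ ⊤)) u v

theorem pdv_fun_add (hf : Differentiable ℝ f) (hg : Differentiable ℝ g) (v : E) :
    pdv v (fun z => f z + g z) = fun z => pdv v f z + pdv v g z :=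
  funext fun z => congr($(fderiv_fun_add (hf z) (hg z)) v)

theorem pdv_fun_sub (hf : Differentiable ℝ f) (hg : Differentiable ℝ g) (v : E) :
    pdv v (fun z => f z - g z) = fun z => pdv v f z - pdv v g z :=
  funext fun z => congr($(fderiv_fun_sub (hf z) (hg z)) v)

theorem pdv_fun_mul (hf : Differentiable ℝ f) (hg : Differentiable ℝ g) (v : E) :
    pdv v (fun z => f z * g z) = fun z => pdv v f z * g z + f z * pdv v g z :=
  funext fun z => by
    rw [pdv, fderiv_fun_mul (hf z) (hg z)]
    simp [pdv]
    ring

theorem pdv_fun_sum {ι : Type*} {s : Finset ι} {f : ι → E → ℝ}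
    (hf : ∀ i ∈ s, Differentiable ℝ (f i)) (v : E) :
    pdv v (fun z => ∑ i ∈ s, f i z) = fun z => ∑ i ∈ s, pdv v (f i) z := by
  funext z
  rw [pdv, fderiv_fun_sum fun i hi => hf i hi z]
  simp [pdv]

theorem pdv_comp_clm {E' : Type*} [NormedAddCommGroup E'] [NormedSpace ℝ E']
    (hf : Differentiable ℝ f) (L : E' →L[ℝ] E) (v : E') :
    pdv v (fun z => f (L z)) = fun z => pdv (L v) f (L z) :=
  funext fun z => congr($(((hf (L z)).hasFDerivAt.comp z L.hasFDerivAt).fderiv) v)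

theorem pdv_intervalIntegral [FiniteDimensional ℝ E] {f : ℝ → E → ℝ}
    (hf : ContDiff ℝ ∞ (Function.uncurry f)) {a b : ℝ} (hab : a ≤ b) (v : E) :
    pdv v (fun z => ∫ t in a..b, f t z) = fun z => ∫ t in a..b, pdv v (f t) z := by
  have hdom := Dominated.of_Ioc hf a b
  funext z
  simp only [intervalIntegral.integral_of_le hab, pdv, hdom.fderiv_integral]
  exact ContinuousLinearMap.integral_apply (hdom.fderiv.integrable z) v

end DirectionalDerivatives

section PoincareLemma

variable {ι X : Type*} [NormedAddCommGroup X] [NormedSpace ℝ X] {S : Finset ι} {v : ι → X}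
  {c : ι → X →L[ℝ] ℝ} {Q : ι → X → ℝ}

/-- The linear contraction by the factor `τ` along the directions `v i`, `i ∈ S`, with respect to
the coordinates `c i`: the homotopy in the Poincaré lemma. -/
def contraction (S : Finset ι) (v : ι → X) (c : ι → X →L[ℝ] ℝ) (τ : ℝ) : X →L[ℝ] X :=
  .id ℝ X + (τ - 1) • ∑ i ∈ S, (c i).smulRight (v i)

theorem contraction_apply (τ : ℝ) (x : X) :
    contraction S v c τ x = x + (τ - 1) • ∑ i ∈ S, c i x • v i := by
  simp [contraction]

theorem contDiff_contraction : ContDiff ℝ ∞ fun p : ℝ × X => contraction S v c p.1 p.2 := by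
  simp only [contraction_apply]
  fun_prop

theorem contraction_of_forall_eq_zero {w : X} (hw : ∀ i ∈ S, c i w = 0) (τ : ℝ) :
    contraction S v c τ w = w := by
  rw [contraction_apply, Finset.sum_eq_zero fun i hi => by rw [hw i hi, zero_smul], smul_zero,
    add_zero]

theorem contraction_apply_self [DecidableEq ι]
    (hcv : ∀ i ∈ S, ∀ j ∈ S, c i (v j) = if i = j then 1 else 0) {j : ι} (hj : j ∈ S) (τ : ℝ) :
    contraction S v c τ (v j) = τ • v j := by
  rw [contraction_apply, Finset.sum_congr rfl fun i hi => by rw [hcv i hi j hj],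
    Finset.sum_eq_single_of_mem j hj fun i _ hij => by simp [hij], if_pos rfl]
  module

/-- The integrand of the homotopy formula. -/
def homotopyIntegrand (S : Finset ι) (v : ι → X) (c : ι → X →L[ℝ] ℝ) (Q : ι → X → ℝ) (τ : ℝ)
    (x : X) : ℝ :=
  ∑ j ∈ S, c j x * Q j (contraction S v c τ x)

theorem contDiff_homotopyIntegrand (hQ : ∀ j, ContDiff ℝ ∞ (Q j)) :
    ContDiff ℝ ∞ (Function.uncurry (homotopyIntegrand S v c Q)) :=
  ContDiff.sum fun j _ => ((c j).contDiff.comp contDiff_snd).mul ((hQ j).comp contDiff_contraction)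

theorem pdv_homotopyIntegrand (hQ : ∀ j, ContDiff ℝ ∞ (Q j)) (w : X) (τ : ℝ) (x : X) :
    pdv w (homotopyIntegrand S v c Q τ) x = ∑ j ∈ S, (c j w * Q j (contraction S v c τ x)
      + c j x * pdv (contraction S v c τ w) (Q j) (contraction S v c τ x)) := by
  have hQd (j) : Differentiable ℝ (Q j) := (hQ j).differentiable (by simp)
  have hcomp (j) : Differentiable ℝ fun x => Q j (contraction S v c τ x) :=
    (hQd j).comp (contraction S v c τ).differentiable
  have hc (j x) : pdv w (c j) x = c j w := by rw [pdv, (c j).fderiv]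
  unfold homotopyIntegrand
  rw [pdv_fun_sum fun j _ => by have := hcomp j; fun_prop]
  simp only [pdv_fun_mul (c _).differentiable (hcomp _), pdv_comp_clm (hQd _), hc]

theorem hasDerivAt_comp_contraction {f : X → ℝ} (hf : Differentiable ℝ f) (x : X) (τ : ℝ) :
    HasDerivAt (fun τ => f (contraction S v c τ x))
      (∑ j ∈ S, c j x * pdv (v j) f (contraction S v c τ x)) τ := by
  have hline : HasDerivAt (fun τ => contraction S v c τ x) (∑ j ∈ S, c j x • v j) τ := by
    simp only [contraction_apply]
    simpa using (((hasDerivAt_id τ).sub_const 1).smul_const (∑ j ∈ S, c j x • v j)).const_add x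
  refine ((hf _).hasFDerivAt.comp_hasDerivAt τ hline).congr_deriv ?_
  simp [pdv]

variable [DecidableEq ι]

theorem pdv_homotopyIntegrand_self (hQ : ∀ j, ContDiff ℝ ∞ (Q j))
    (hcv : ∀ i ∈ S, ∀ j ∈ S, c i (v j) = if i = j then 1 else 0)
    (hclosed : ∀ i ∈ S, ∀ j ∈ S, pdv (v i) (Q j) = pdv (v j) (Q i)) {i : ι} (hi : i ∈ S) (τ : ℝ)
    (x : X) :
    pdv (v i) (homotopyIntegrand S v c Q τ) x = Q i (contraction S v c τ x)
      + τ * ∑ j ∈ S, c j x * pdv (v j) (Q i) (contraction S v c τ x) := by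
  have hpdv (j : ι) (z : X) : pdv (τ • v i) (Q j) z = τ * pdv (v i) (Q j) z := map_smul _ _ _
  rw [pdv_homotopyIntegrand hQ, contraction_apply_self hcv hi, Finset.sum_add_distrib,
    Finset.mul_sum]
  congr 1
  · rw [Finset.sum_congr rfl fun j hj => by rw [hcv j hj i hi], Finset.sum_eq_single_of_mem i hi
      fun j _ hji => by simp [hji], if_pos rfl, one_mul]
  · refine Finset.sum_congr rfl fun j hj => ?_
    rw [hpdv, hclosed i hi j hj]
    ring

theorem pdv_integral_homotopyIntegrand [FiniteDimensional ℝ X] (hQ : ∀ j, ContDiff ℝ ∞ (Q j))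
    (hcv : ∀ i ∈ S, ∀ j ∈ S, c i (v j) = if i = j then 1 else 0)
    (hclosed : ∀ i ∈ S, ∀ j ∈ S, pdv (v i) (Q j) = pdv (v j) (Q i)) {i : ι} (hi : i ∈ S) :
    pdv (v i) (fun x => ∫ τ in (0 : ℝ)..1, homotopyIntegrand S v c Q τ x) = Q i := by
  have hsmooth := contDiff_homotopyIntegrand (S := S) (v := v) (c := c) hQ
  rw [pdv_intervalIntegral hsmooth zero_le_one]
  funext x
  have hderiv (τ : ℝ) : HasDerivAt (fun τ => τ * Q i (contraction S v c τ x))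
      (pdv (v i) (homotopyIntegrand S v c Q τ) x) τ := by
    refine ((hasDerivAt_id τ).mul (hasDerivAt_comp_contraction
      ((hQ i).differentiable (by simp)) x τ)).congr_deriv ?_
    rw [pdv_homotopyIntegrand_self hQ hcv hclosed hi, id, one_mul]
  have hcont : Continuous fun τ => pdv (v i) (homotopyIntegrand S v c Q τ) x :=
    ((contDiff_fderiv_param hsmooth).continuous.comp (by fun_prop :
      Continuous fun τ : ℝ => (τ, x))).clm_apply continuous_const
  rw [intervalIntegral.integral_eq_sub_of_hasDerivAt (fun τ _ => hderiv τ)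
    (hcont.intervalIntegrable _ _)]
  simp [contraction_apply]

theorem exists_pdv_eq [FiniteDimensional ℝ X] (hQ : ∀ j, ContDiff ℝ ∞ (Q j))
    (hcv : ∀ i ∈ S, ∀ j ∈ S, c i (v j) = if i = j then 1 else 0)
    (hclosed : ∀ i ∈ S, ∀ j ∈ S, pdv (v i) (Q j) = pdv (v j) (Q i)) :
    ∃ f : X → ℝ, ContDiff ℝ ∞ f ∧ (∀ i ∈ S, pdv (v i) f = Q i) ∧
      ∀ w, (∀ j ∈ S, c j w = 0) → (∀ j ∈ S, pdv w (Q j) = 0) → pdv w f = 0 := by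
  have hsmooth := contDiff_homotopyIntegrand (S := S) (v := v) (c := c) hQ
  refine ⟨fun x => ∫ τ in (0 : ℝ)..1, homotopyIntegrand S v c Q τ x,
    contDiff_intervalIntegral hsmooth zero_le_one,
    fun i hi => pdv_integral_homotopyIntegrand hQ hcv hclosed hi, fun w hw hwQ => ?_⟩
  rw [pdv_intervalIntegral hsmooth zero_le_one]
  funext x
  have hzero (τ : ℝ) : pdv w (homotopyIntegrand S v c Q τ) x = 0 := by
    rw [pdv_homotopyIntegrand hQ, contraction_of_forall_eq_zero hw]
    exact Finset.sum_eq_zero fun j hj => by simp [hw j hj, hwQ j hj]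
  simp [hzero]

end PoincareLemma

section PhaseSpace

variable {ι : Type*}

/-- The space `ℝⁿ × ℝⁿ` with coordinates `(x, y)`, the coordinates `x` and `y` being indexed by
the finite type `ι`. -/
abbrev Phase (ι : Type*) : Type _ := (ι → ℝ) × (ι → ℝ)

/-- The direction of the coordinate `x i`. -/
def xDir [DecidableEq ι] (i : ι) : Phase ι := (Pi.single i 1, 0)

/-- The direction of the coordinate `y i`. -/
def yDir [DecidableEq ι] (i : ι) : Phase ι := (0, Pi.single i 1)

variable [Fintype ι] [DecidableEq ι]

theorem rot_xDir (θ : ℝ) (i : ι) :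
    rot θ (xDir i) = Real.cos θ • xDir i + Real.sin θ • yDir i := by
  simp [rot_apply, xDir, yDir]

theorem rot_yDir (θ : ℝ) (i : ι) :
    rot θ (yDir i) = -Real.sin θ • xDir i + Real.cos θ • yDir i := by
  simp [rot_apply, xDir, yDir]

/-- The coefficients `Θ_{x^i y^j} - Θ_{x^j y^i}` of the family of two-forms with potential `Θ`. -/
def skewHessian (i j : ι) (Θ : Phase ι → ℝ) (z : Phase ι) : ℝ :=
  pdv (xDir i) (pdv (yDir j) Θ) z - pdv (xDir j) (pdv (yDir i) Θ) z

variable {Θ : Phase ι → ℝ}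

theorem skewHessian_swap (i j : ι) (Θ : Phase ι → ℝ) (z : Phase ι) :
    skewHessian i j Θ z = -skewHessian j i Θ z :=
  (neg_sub _ _).symm

theorem contDiff_skewHessian (hΘ : ContDiff ℝ ∞ Θ) (i j : ι) :
    ContDiff ℝ ∞ (skewHessian i j Θ) :=
  (contDiff_pdv (contDiff_pdv hΘ _) _).sub (contDiff_pdv (contDiff_pdv hΘ _) _)

theorem skewHessian_fun_add {Ξ : Phase ι → ℝ} (hΘ : ContDiff ℝ ∞ Θ) (hΞ : ContDiff ℝ ∞ Ξ)
    (i j : ι) (z : Phase ι) :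
    skewHessian i j (fun z => Θ z + Ξ z) z = skewHessian i j Θ z + skewHessian i j Ξ z := by
  have hd {f : Phase ι → ℝ} (hf : ContDiff ℝ ∞ f) := hf.differentiable (by simp)
  have hpdv (u v : Phase ι) : pdv u (pdv v fun z => Θ z + Ξ z)
      = fun z => pdv u (pdv v Θ) z + pdv u (pdv v Ξ) z := by
    rw [pdv_fun_add (hd hΘ) (hd hΞ), pdv_fun_add (hd (contDiff_pdv hΘ v)) (hd (contDiff_pdv hΞ v))]
  simp only [skewHessian, hpdv]
  ring

theorem skewHessian_comp_rot (hΘ : ContDiff ℝ ∞ Θ) (i j : ι) (θ : ℝ) (z : Phase ι) :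
    skewHessian i j (fun z => Θ (rot θ z)) z = skewHessian i j Θ (rot θ z) := by
  have hd {f : Phase ι → ℝ} (hf : ContDiff ℝ ∞ f) := hf.differentiable (by simp)
  have hsymm (u v : Phase ι) := congrFun (pdv_comm hΘ u v) (rot θ z)
  simp only [pdv_pdv hΘ] at hsymm
  simp only [skewHessian, pdv_comp_clm (hd hΘ), pdv_comp_clm (hd (contDiff_pdv hΘ _)), rot_xDir,
    rot_yDir, pdv_pdv hΘ, map_add, map_smul, add_apply, smul_apply, smul_eq_mul]
  rw [hsymm (yDir i) (xDir j), hsymm (yDir j) (xDir i), hsymm (xDir j) (xDir i),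
    hsymm (yDir j) (yDir i)]
  linear_combination (fderiv ℝ (fderiv ℝ Θ) (rot θ z) (xDir i) (yDir j)
    - fderiv ℝ (fderiv ℝ Θ) (rot θ z) (xDir j) (yDir i)) * Real.cos_sq_add_sin_sq θ

theorem skewHessian_intervalIntegral {f : ℝ → Phase ι → ℝ}
    (hf : ContDiff ℝ ∞ (Function.uncurry f)) {a b : ℝ} (hab : a ≤ b) (i j : ι) (z : Phase ι) :
    skewHessian i j (fun z => ∫ t in a..b, f t z) z = ∫ t in a..b, skewHessian i j (f t) z := by
  have hpdv {f : ℝ → Phase ι → ℝ} (hf : ContDiff ℝ ∞ (Function.uncurry f)) (v : Phase ι) :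
      ContDiff ℝ ∞ (Function.uncurry fun t => pdv v (f t)) :=
    (contDiff_fderiv_param hf).clm_apply contDiff_const
  have hint (u v : Phase ι) :
      IntervalIntegrable (fun t => pdv u (pdv v (f t)) z) volume a b :=
    ((hpdv (hpdv hf v) u).continuous.comp (by fun_prop :
      Continuous fun t : ℝ => (t, z))).intervalIntegrable a b
  simp only [skewHessian]
  rw [intervalIntegral.integral_sub (hint _ _) (hint _ _), pdv_intervalIntegral hf hab,
    pdv_intervalIntegral (hpdv hf _) hab, pdv_intervalIntegral hf hab,
    pdv_intervalIntegral (hpdv hf _) hab]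

end PhaseSpace

section ClosedJets

variable {ι : Type*} [DecidableEq ι]

/-- The possible first derivatives of a family `(Q j)` of functions on `Phase ι` which does not
depend on the `k`-th plane and for which `∑ j ∈ S, Q j dx j` and `∑ j ∈ S, Q j dy j` are closed in
the variables `x j`, resp. `y j`, with `j ∈ S`. -/
def closedJets (S : Finset ι) (k : ι) : Submodule ℝ (Phase ι →L[ℝ] ι → ℝ) where
  carrier := {D | (∀ i ∈ S, ∀ j ∈ S, D (xDir i) j = D (xDir j) i ∧ D (yDir i) j = D (yDir j) i) ∧
    D (xDir k) = 0 ∧ D (yDir k) = 0}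
  zero_mem' := by simp
  add_mem' := fun {D D'} hD hD' =>
    ⟨fun i hi j hj => by simp [hD.1 i hi j hj, hD'.1 i hi j hj],
      by simp [hD.2, hD'.2]⟩
  smul_mem' := fun a D hD =>
    ⟨fun i hi j hj => by simp [hD.1 i hi j hj], by simp [hD.2]⟩

variable {S : Finset ι} {k : ι}

/-- The projection of `Phase ι` which sets the coordinates `x k` and `y k` to zero. -/
def dropPlane (k : ι) : Phase ι →L[ℝ] Phase ι :=
  .id ℝ _ - (((ContinuousLinearMap.proj k).comp (.fst ℝ (ι → ℝ) (ι → ℝ))).smulRight (xDir k)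
    + ((ContinuousLinearMap.proj k).comp (.snd ℝ (ι → ℝ) (ι → ℝ))).smulRight (yDir k))

theorem dropPlane_apply (k : ι) (z : Phase ι) :
    dropPlane k z = z - (z.1 k • xDir k + z.2 k • yDir k) :=
  rfl

theorem comp_dropPlane_mem_closedJets {D : Phase ι →L[ℝ] ι → ℝ} (hk : k ∉ S)
    (hD : ∀ i ∈ S, ∀ j ∈ S, D (xDir i) j = D (xDir j) i ∧ D (yDir i) j = D (yDir j) i) :
    D.comp (dropPlane k) ∈ closedJets S k := by
  have hdrop (i : ι) (hi : i ∈ S) :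
      dropPlane k (xDir i) = xDir i ∧ dropPlane k (yDir i) = yDir i := by
    have hik : k ≠ i := fun h => hk (h ▸ hi)
    simp [dropPlane_apply, xDir, yDir, hik]
  refine ⟨fun i hi j hj => ?_, ?_⟩
  · simpa [hdrop i hi, hdrop j hj] using hD i hi j hj
  · simp [dropPlane_apply, xDir, yDir]

variable [Fintype ι]

theorem comp_rot_mem_closedJets {D : Phase ι →L[ℝ] ι → ℝ} (hD : D ∈ closedJets S k) (θ : ℝ) :
    D.comp (rot θ) ∈ closedJets S k := by
  refine ⟨fun i hi j hj => ?_, ?_⟩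
  · simp [rot_xDir, rot_yDir, hD.1 i hi j hj]
  · simp [rot_xDir, rot_yDir, hD.2]

theorem exists_dualRadon_offsetDeriv_eq {f : (ℝ × ℝ) × Phase ι → ι → ℝ} (hf : ContDiff ℝ ∞ f)
    (hclosed : ∀ v w, fderiv ℝ (fun w => f (v, w)) w ∈ closedJets S k) :
    ∃ Q : (ℝ × ℝ) × Phase ι → ι → ℝ, ContDiff ℝ ∞ Q ∧
      (∀ p w, fderiv ℝ (fun w => Q (p, w)) w ∈ closedJets S k) ∧
      ∀ v w, dualRadon (offsetDeriv Q) v w = f (v, w) := by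
  have : IsClosed (closedJets S k : Set (Phase ι →L[ℝ] ι → ℝ)) :=
    (closedJets S k).closed_of_finiteDimensional
  have hmem (D : Phase ι →L[ℝ] ι → ℝ) : (closedJets S k).mkQL D = 0 ↔ D ∈ closedJets S k :=
    Submodule.Quotient.mk_eq_zero _
  have hℓ : SolvesFibrewise (G := (Phase ι →L[ℝ] ι → ℝ) ⧸ closedJets S k)
      (closedJets S k).mkQL f := fun v w => (hmem _).2 (hclosed v w)
  obtain ⟨q, hq, hqℓ, hqf⟩ := exists_dualRadon_eq hf hℓ
  obtain ⟨Q, hQ, hQℓ, rfl⟩ := exists_offsetDeriv_eq hq hqℓ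
  exact ⟨Q, hQ, fun p w => (hmem _).1 (hQℓ p w), hqf⟩

end ClosedJets

section Potential

variable {ι : Type*} [Fintype ι] {S : Finset ι} {k : ι}

section LinePotential

variable {Q : (ℝ × ℝ) × Phase ι → ι → ℝ}

/-- The family `Q`, for the line through `z` in the `k`-th plane which becomes vertical after
rotation by `-θ`, in the rotated coordinates `rot (-θ) z`. The first argument is `θ`. -/
def pullbackToLines (k : ι) (Q : (ℝ × ℝ) × Phase ι → ι → ℝ) (j : ι) (x : ℝ × Phase ι) : ℝ :=
  Q ((x.1, x.2.1 k), rot x.1 x.2) j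

theorem contDiff_pullbackToLines (hQ : ContDiff ℝ ∞ Q) (j : ι) :
    ContDiff ℝ ∞ (pullbackToLines k Q j) := by
  have hrot : ContDiff ℝ ∞ fun x : ℝ × Phase ι => rot x.1 x.2 := contDiff_rot
  exact contDiff_pi.1 (hQ.comp (by fun_prop :
    ContDiff ℝ ∞ fun x : ℝ × Phase ι => ((x.1, x.2.1 k), rot x.1 x.2))) j

theorem pdv_pullbackToLines (hQ : ContDiff ℝ ∞ Q) (j : ι) (v : Phase ι) (x : ℝ × Phase ι) :
    pdv (0, v) (pullbackToLines k Q j) x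
      = v.1 k * offsetDeriv Q ((x.1, x.2.1 k), rot x.1 x.2) j
        + fderiv ℝ (fun w => Q ((x.1, x.2.1 k), w)) (rot x.1 x.2) (rot x.1 v) j := by
  set p : ℝ × ℝ := (x.1, x.2.1 k) with hp
  have hQx := (hQ.differentiable (by simp) (p, rot x.1 x.2)).hasFDerivAt
  have hslice : fderiv ℝ (fun w => Q (p, w)) (rot x.1 x.2) (rot x.1 v)
      = fderiv ℝ Q (p, rot x.1 x.2) (0, rot x.1 v) :=
    congr($((hQx.comp _ (hasFDerivAt_prodMk_right p _)).fderiv) (rot x.1 v))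
  have hsplit : (((0, v.1 k), rot x.1 v) : (ℝ × ℝ) × Phase ι)
      = v.1 k • ((0, 1), 0) + (0, rot x.1 v) := by simp
  have hline : HasDerivAt (fun t : ℝ => x + t • ((0 : ℝ), v)) (0, v) 0 := by
    simpa using ((hasDerivAt_id (0 : ℝ)).smul_const ((0 : ℝ), v)).const_add x
  have hinner : HasDerivAt
      (fun t : ℝ => ((x.1, x.2.1 k + t * v.1 k), rot x.1 x.2 + t • rot x.1 v))
      ((0, v.1 k), rot x.1 v) 0 :=
    ((hasDerivAt_const 0 x.1).prodMk (by
      simpa using ((hasDerivAt_id (0 : ℝ)).mul_const (v.1 k)).const_add (x.2.1 k))).prodMk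
      (by simpa using ((hasDerivAt_id (0 : ℝ)).smul_const (rot x.1 v)).const_add (rot x.1 x.2))
  have hchain := hasDerivAt_pi.1 (hQx.comp_hasDerivAt_of_eq 0 hinner (by simp [hp])) j
  have hpullback := ((contDiff_pullbackToLines (k := k) hQ j).differentiable (by simp)
    x).hasFDerivAt.comp_hasDerivAt_of_eq 0 hline (by simp)
  rw [pdv, hpullback.unique (hchain.congr_of_eventuallyEq (.of_forall fun t => by
    simp [pullbackToLines])), hsplit, map_add, map_smul, hslice]
  rfl

variable [DecidableEq ι]

theorem exists_potential_on_lines (hQ : ContDiff ℝ ∞ Q) (hk : k ∉ S)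
    (hclosed : ∀ p w, fderiv ℝ (fun w => Q (p, w)) w ∈ closedJets S k) :
    ∃ F : ℝ × Phase ι → ℝ, ContDiff ℝ ∞ F ∧
      (∀ j ∈ S, pdv (0, yDir j) F = pullbackToLines k Q j) ∧ pdv (0, yDir k) F = 0 := by
  have hjet (x : ℝ × Phase ι) := comp_rot_mem_closedJets (hclosed (x.1, x.2.1 k) (rot x.1 x.2)) x.1
  have hy (i : ι) (hi : i ∈ S) (j : ι) (hj : j ∈ S) :
      pdv (0, yDir i) (pullbackToLines k Q j) = pdv (0, yDir j) (pullbackToLines k Q i) := by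
    funext x
    rw [pdv_pullbackToLines hQ, pdv_pullbackToLines hQ]
    simpa [yDir] using ((hjet x).1 i hi j hj).2
  obtain ⟨F, hF, hFS, hFk⟩ := exists_pdv_eq (S := S) (v := fun i => ((0 : ℝ), yDir i))
    (c := fun i => (ContinuousLinearMap.proj i).comp
      ((ContinuousLinearMap.snd ℝ (ι → ℝ) (ι → ℝ)).comp (.snd ℝ ℝ (Phase ι))))
    (contDiff_pullbackToLines (k := k) hQ) (fun i _ j _ => by simp [yDir, Pi.single_apply])
    hy
  refine ⟨F, hF, hFS, hFk _ (fun j hj => ?_) fun j _ => funext fun x => ?_⟩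
  · have hjk : j ≠ k := fun h => hk (h ▸ hj)
    simp [yDir, hjk]
  · rw [pdv_pullbackToLines hQ]
    simpa [yDir] using congrFun (hjet x).2.2 j

theorem exists_skewHessian_slice_eq (hQ : ContDiff ℝ ∞ Q) (hk : k ∉ S)
    (hclosed : ∀ p w, fderiv ℝ (fun w => Q (p, w)) w ∈ closedJets S k) :
    ∃ F : ℝ × Phase ι → ℝ, ContDiff ℝ ∞ F ∧ ∀ θ z,
      (∀ j ∈ S, skewHessian k j (fun z => F (θ, z)) z
        = offsetDeriv Q ((θ, z.1 k), rot θ z) j) ∧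
      ∀ i ∈ S, ∀ j ∈ S, skewHessian i j (fun z => F (θ, z)) z = 0 := by
  obtain ⟨F, hF, hFS, hFk⟩ := exists_potential_on_lines hQ hk hclosed
  have hslice {f : ℝ × Phase ι → ℝ} (hf : ContDiff ℝ ∞ f) (θ : ℝ) (v : Phase ι) :
      pdv v (fun z => f (θ, z)) = fun z => pdv (0, v) f (θ, z) :=
    funext fun z => congr($(((hf.differentiable (by simp) (θ, z)).hasFDerivAt.comp z
      (hasFDerivAt_prodMk_right θ z)).fderiv) v)
  have hpdv (θ : ℝ) (i j : ι) (z : Phase ι) :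
      skewHessian i j (fun z => F (θ, z)) z
        = pdv (0, xDir i) (pdv (0, yDir j) F) (θ, z)
          - pdv (0, xDir j) (pdv (0, yDir i) F) (θ, z) := by
    simp only [skewHessian, hslice hF, hslice (contDiff_pdv hF _)]
  refine ⟨F, hF, fun θ z => ?_⟩
  have hjet := comp_rot_mem_closedJets (hclosed (θ, z.1 k) (rot θ z)) θ
  have hxS (i : ι) (hi : i ∈ S) : (xDir i).1 k = 0 := by
    have hik : k ≠ i := fun h => hk (h ▸ hi)
    simp [xDir, hik]
  refine ⟨fun j hj => ?_, fun i hi j hj => ?_⟩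
  · have hzero : pdv (0, xDir j) (0 : ℝ × Phase ι → ℝ) (θ, z) = 0 := by simp [pdv]
    have hjk := congrFun hjet.2.1 j
    simp only [ContinuousLinearMap.comp_apply] at hjk
    rw [hpdv, hFS j hj, hFk, pdv_pullbackToLines hQ, hjk, hzero]
    simp [xDir]
  · rw [hpdv, hFS j hj, hFS i hi, pdv_pullbackToLines hQ, pdv_pullbackToLines hQ, hxS i hi,
      hxS j hj, zero_mul, zero_mul, zero_add, zero_add, sub_eq_zero]
    exact (hjet.1 i hi j hj).1

end LinePotential

/-- The superposition of the functions `F (θ, ·)`, each rotated back by `θ`. -/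
def rotationAverage (F : ℝ × Phase ι → ℝ) (z : Phase ι) : ℝ :=
  ∫ θ in 0..2 * π, F (θ, rot (-θ) z)

variable {F : ℝ × Phase ι → ℝ}

theorem contDiff_comp_rot_neg (hF : ContDiff ℝ ∞ F) :
    ContDiff ℝ ∞ (Function.uncurry fun θ z => F (θ, rot (-θ) z)) := by
  have hrot : ContDiff ℝ ∞ fun p : ℝ × Phase ι => rot (-p.1) p.2 := by
    simp only [rot_apply]
    fun_prop
  exact hF.comp (contDiff_fst.prodMk hrot)

theorem contDiff_rotationAverage (hF : ContDiff ℝ ∞ F) : ContDiff ℝ ∞ (rotationAverage F) :=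
  contDiff_intervalIntegral (contDiff_comp_rot_neg hF) Real.two_pi_pos.le

variable [DecidableEq ι]

theorem skewHessian_rotationAverage (hF : ContDiff ℝ ∞ F) (i j : ι) (z : Phase ι) :
    skewHessian i j (rotationAverage F) z
      = ∫ θ in 0..2 * π, skewHessian i j (fun z => F (θ, z)) (rot (-θ) z) := by
  unfold rotationAverage
  rw [skewHessian_intervalIntegral (contDiff_comp_rot_neg hF) Real.two_pi_pos.le]
  congr! 2 with θ
  exact skewHessian_comp_rot (hF.comp (contDiff_prodMk_right θ)) i j (-θ) z

theorem exists_skewHessian_eq_dualRadon {Q : (ℝ × ℝ) × Phase ι → ι → ℝ} (hQ : ContDiff ℝ ∞ Q)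
    (hk : k ∉ S) (hclosed : ∀ p w, fderiv ℝ (fun w => Q (p, w)) w ∈ closedJets S k) :
    ∃ Θ : Phase ι → ℝ, ContDiff ℝ ∞ Θ ∧
      (∀ j ∈ S, ∀ z, skewHessian k j Θ z = dualRadon (offsetDeriv Q) (z.1 k, z.2 k) z j) ∧
      ∀ i ∈ S, ∀ j ∈ S, ∀ z, skewHessian i j Θ z = 0 := by
  obtain ⟨F, hF, hFskew⟩ := exists_skewHessian_slice_eq hQ hk hclosed
  refine ⟨rotationAverage F, contDiff_rotationAverage hF, fun j hj z => ?_, fun i hi j hj z => ?_⟩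
  · have hint : IntervalIntegrable
        (fun θ => offsetDeriv Q ((θ, (rot (-θ) (z.1 k, z.2 k)).1), z)) volume 0 (2 * π) := by
      refine Continuous.intervalIntegrable ?_ _ _
      have h1 : Continuous fun θ : ℝ => rot (-θ) (z.1 k, z.2 k) := by
        simp only [rot_apply]
        fun_prop
      have h2 := (contDiff_offsetDeriv hQ).continuous
      fun_prop
    rw [skewHessian_rotationAverage hF, dualRadon]
    simp only [(hFskew _ _).1 j hj, rot_rot_neg]
    exact (ContinuousLinearMap.proj (R := ℝ) (φ := fun _ : ι => ℝ) j).intervalIntegral_comp_comm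
      hint
  · rw [skewHessian_rotationAverage hF]
    simp only [(hFskew _ _).2 i hi j hj, intervalIntegral.integral_zero]

theorem exists_skewHessian_eq {u : ι → Phase ι → ℝ} (hu : ∀ j, ContDiff ℝ ∞ (u j)) (hk : k ∉ S)
    (hx : ∀ i ∈ S, ∀ j ∈ S, pdv (xDir i) (u j) = pdv (xDir j) (u i))
    (hy : ∀ i ∈ S, ∀ j ∈ S, pdv (yDir i) (u j) = pdv (yDir j) (u i)) :
    ∃ Θ : Phase ι → ℝ, ContDiff ℝ ∞ Θ ∧ (∀ j ∈ S, ∀ z, skewHessian k j Θ z = u j z) ∧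
      ∀ i ∈ S, ∀ j ∈ S, ∀ z, skewHessian i j Θ z = 0 := by
  have hU : ContDiff ℝ ∞ fun z j => u j z := contDiff_pi.2 hu
  let f (p : (ℝ × ℝ) × Phase ι) (j : ι) : ℝ :=
    u j (p.1.1 • xDir k + p.1.2 • yDir k + dropPlane k p.2)
  have hf : ContDiff ℝ ∞ f := hU.comp (by fun_prop : ContDiff ℝ ∞ fun p : (ℝ × ℝ) × Phase ι =>
    p.1.1 • xDir k + p.1.2 • yDir k + dropPlane k p.2)
  have hclosed (v : ℝ × ℝ) (w : Phase ι) : fderiv ℝ (fun w => f (v, w)) w ∈ closedJets S k := by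
    let a : Phase ι := v.1 • xDir k + v.2 • yDir k
    have hUd := hU.differentiable (by simp) (a + dropPlane k w)
    rw [show (fun w => f (v, w)) = (fun z j => u j z) ∘ fun w => a + dropPlane k w from rfl,
      (hUd.hasFDerivAt.comp w ((dropPlane k).hasFDerivAt.const_add a)).fderiv]
    have hpdv (e : Phase ι) (j : ι) :
        fderiv ℝ (fun z j => u j z) (a + dropPlane k w) e j = pdv e (u j) (a + dropPlane k w) :=
      congr($((hasFDerivAt_pi'.1 hUd.hasFDerivAt j).fderiv) e).symm
    refine comp_dropPlane_mem_closedJets hk fun i hi j hj => ?_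
    simp only [hpdv, hx i hi j hj, hy i hi j hj, and_self]
  obtain ⟨Q, hQ, hQclosed, hQf⟩ := exists_dualRadon_offsetDeriv_eq hf hclosed
  obtain ⟨Θ, hΘ, hΘk, hΘS⟩ := exists_skewHessian_eq_dualRadon hQ hk hQclosed
  refine ⟨Θ, hΘ, fun j hj z => ?_, hΘS⟩
  rw [hΘk j hj, hQf]
  simp [f, dropPlane_apply]

end Potential

end Backprojection

section Biclosed

variable {ι : Type*} [Fintype ι] [DecidableEq ι]

/-- Smooth skew-symmetric families `ω` whose two-forms are closed in the variables `x` and in the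
variables `y`, that is, closed in the variables `y - λ⁻¹ x` for every value of `λ`. -/
structure IsBiclosed (ω : ι → ι → Phase ι → ℝ) : Prop where
  smooth : ∀ i j, ContDiff ℝ (⊤ : ℕ∞) (ω i j)
  skew : ∀ i j z, ω i j z = -ω j i z
  cyclic_y : ∀ i j k z,
    pdv (yDir k) (ω i j) z + pdv (yDir i) (ω j k) z + pdv (yDir j) (ω k i) z = 0
  cyclic_x : ∀ i j k z,
    pdv (xDir k) (ω i j) z + pdv (xDir i) (ω j k) z + pdv (xDir j) (ω k i) z = 0

theorem isBiclosed_skewHessian {Θ : Phase ι → ℝ} (hΘ : ContDiff ℝ (⊤ : ℕ∞) Θ) :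
    IsBiclosed fun i j => skewHessian i j Θ := by
  have hpdv (v : Phase ι) (i j : ι) (z : Phase ι) : pdv v (skewHessian i j Θ) z
      = pdv v (pdv (xDir i) (pdv (yDir j) Θ)) z - pdv v (pdv (xDir j) (pdv (yDir i) Θ)) z := by
    have hd (i j : ι) : Differentiable ℝ (pdv (xDir i) (pdv (yDir j) Θ)) :=
      (contDiff_pdv (contDiff_pdv hΘ _) _).differentiable (by simp)
    exact congrFun (pdv_fun_sub (hd i j) (hd j i) v) z
  refine ⟨contDiff_skewHessian hΘ, fun i j => skewHessian_swap i j Θ, fun i j k z => ?_,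
    fun i j k z => ?_⟩
  · have hyx (a b c : ι) : pdv (yDir a) (pdv (xDir b) (pdv (yDir c) Θ))
        = pdv (xDir b) (pdv (yDir a) (pdv (yDir c) Θ)) := pdv_comm (contDiff_pdv hΘ _) _ _
    simp only [hpdv, hyx]
    rw [pdv_comm hΘ (yDir k) (yDir j), pdv_comm hΘ (yDir k) (yDir i),
      pdv_comm hΘ (yDir i) (yDir j)]
    ring
  · have hxx (a b c : ι) := pdv_comm (contDiff_pdv hΘ (yDir c)) (xDir a) (xDir b)
    simp only [hpdv]
    rw [hxx k i j, hxx i j k, hxx j k i]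
    ring

variable {ω : ι → ι → Phase ι → ℝ} {S : Finset ι} {k : ι}

theorem IsBiclosed.sub {ω' : ι → ι → Phase ι → ℝ} (h : IsBiclosed ω) (h' : IsBiclosed ω') :
    IsBiclosed fun i j z => ω i j z - ω' i j z := by
  have hpdv (v : Phase ι) (i j : ι) := pdv_fun_sub ((h.smooth i j).differentiable (by simp))
    ((h'.smooth i j).differentiable (by simp)) v
  refine ⟨fun i j => (h.smooth i j).sub (h'.smooth i j), fun i j z => ?_, fun i j k z => ?_,
    fun i j k z => ?_⟩
  · linear_combination h.skew i j z - h'.skew i j z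
  · simp only [hpdv]
    linear_combination h.cyclic_y i j k z - h'.cyclic_y i j k z
  · simp only [hpdv]
    linear_combination h.cyclic_x i j k z - h'.cyclic_x i j k z

theorem IsBiclosed.exists_skewHessian_eq_on_insert (h : IsBiclosed ω) (hk : k ∉ S)
    (hS : ∀ i ∈ S, ∀ j ∈ S, ∀ z, ω i j z = 0) :
    ∃ Θ : Phase ι → ℝ, ContDiff ℝ (⊤ : ℕ∞) Θ ∧
      ∀ i ∈ insert k S, ∀ j ∈ insert k S, ∀ z, ω i j z = skewHessian i j Θ z := by
  have hpdv_zero (v : Phase ι) {i j : ι} (hi : i ∈ S) (hj : j ∈ S) (z : Phase ι) :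
      pdv v (ω i j) z = 0 := by
    rw [show ω i j = fun _ => 0 from funext (hS i hi j hj)]
    simp [pdv]
  have hpdv_swap (v : Phase ι) (j : ι) (z : Phase ι) : pdv v (ω j k) z = -pdv v (ω k j) z := by
    rw [show ω j k = fun z => -ω k j z from funext (h.skew j k), pdv, fderiv_fun_neg]
    rfl
  obtain ⟨Θ, hΘ, hΘk, hΘS⟩ := exists_skewHessian_eq (h.smooth k) hk
    (fun i hi j hj => funext fun z => by
      linear_combination hpdv_zero (xDir k) hi hj z + hpdv_swap (xDir i) j z - h.cyclic_x i j k z)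
    (fun i hi j hj => funext fun z => by
      linear_combination hpdv_zero (yDir k) hi hj z + hpdv_swap (yDir i) j z - h.cyclic_y i j k z)
  refine ⟨Θ, hΘ, fun i hi j hj z => ?_⟩
  rcases Finset.mem_insert.1 hi with hik | hi <;> rcases Finset.mem_insert.1 hj with hjk | hj
  · rw [hik, hjk]
    linear_combination (h.skew k k z - skewHessian_swap k k Θ z) / 2
  · rw [hik, hΘk j hj]
  · rw [hjk, h.skew, skewHessian_swap, hΘk i hi]
  · rw [hS i hi j hj, hΘS i hi j hj]

theorem IsBiclosed.exists_skewHessian_eq_on (h : IsBiclosed ω) (S : Finset ι) :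
    ∃ Θ : Phase ι → ℝ, ContDiff ℝ (⊤ : ℕ∞) Θ ∧
      ∀ i ∈ S, ∀ j ∈ S, ∀ z, ω i j z = skewHessian i j Θ z := by
  induction S using Finset.induction_on with
  | empty => exact ⟨0, contDiff_const, by simp⟩
  | insert k S hk ih =>
    obtain ⟨Ξ, hΞ, hΞω⟩ := ih
    obtain ⟨Θ, hΘ, hΘω⟩ := (h.sub (isBiclosed_skewHessian hΞ)).exists_skewHessian_eq_on_insert hk
      fun i hi j hj z => sub_eq_zero.2 (hΞω i hi j hj z)
    refine ⟨fun z => Θ z + Ξ z, hΘ.add hΞ, fun i hi j hj z => ?_⟩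
    rw [skewHessian_fun_add hΘ hΞ, ← hΘω i hi j hj, sub_add_cancel]

theorem stmt4_general (ω : ι → ι → Phase ι → ℝ) (hsmooth : ∀ i j, ContDiff ℝ (⊤ : ℕ∞) (ω i j))
    (hskew : ∀ i j z, ω i j z = -ω j i z)
    (hcycY : ∀ i j k z,
      pdv (yDir k) (ω i j) z + pdv (yDir i) (ω j k) z + pdv (yDir j) (ω k i) z = 0)
    (hcycX : ∀ i j k z,
      pdv (xDir k) (ω i j) z + pdv (xDir i) (ω j k) z + pdv (xDir j) (ω k i) z = 0) :
    ∃ Θ : Phase ι → ℝ, ContDiff ℝ (⊤ : ℕ∞) Θ ∧ ∀ i j z,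
      ω i j z = pdv (xDir i) (pdv (yDir j) Θ) z - pdv (xDir j) (pdv (yDir i) Θ) z := by
  obtain ⟨Θ, hΘ, hωΘ⟩ := IsBiclosed.exists_skewHessian_eq_on ⟨hsmooth, hskew, hcycY, hcycX⟩
    Finset.univ
  exact ⟨Θ, hΘ, fun i j => hωΘ i (Finset.mem_univ i) j (Finset.mem_univ j)⟩

end Biclosed

/-- if smooth functions `ω_{ij} : ℝ⁸ → ℝ` are skew-symmetric and satisfy the
cyclic closedness conditions in the `y` and in the `x` variables, then there is a smooth
potential `Θ` with `ω_{ij} = Θ_{x^i y^j} − Θ_{x^j y^i}`. -/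
theorem stmt4 (ω : Fin 4 → Fin 4 → E8 → ℝ)
    (hsmooth : ∀ i j : Fin 4, ContDiff ℝ (⊤ : ℕ∞) (ω i j))
    (hskew : ∀ i j : Fin 4, ∀ z : E8, ω i j z = -ω j i z)
    (hcycY : ∀ i j k : Fin 4, ∀ z : E8,
      pdv (dy k) (ω i j) z + pdv (dy i) (ω j k) z + pdv (dy j) (ω k i) z = 0)
    (hcycX : ∀ i j k : Fin 4, ∀ z : E8,
      pdv (dx k) (ω i j) z + pdv (dx i) (ω j k) z + pdv (dx j) (ω k i) z = 0) :
    ∃ Θ : E8 → ℝ, ContDiff ℝ (⊤ : ℕ∞) Θ ∧ ∀ i j : Fin 4, ∀ z : E8,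
      ω i j z = pdv (dx i) (pdv (dy j) Θ) z - pdv (dx j) (pdv (dy i) Θ) z :=
  stmt4_general ω hsmooth hskew hcycY hcycX

end
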